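/- arXiv:math/0502128 — 2 statements merged into one kernel-verified Lean document; each statement's English description precedes it below -/
import Mathlib

section
/- Let (U, •, g̃, E) be a Frobenius manifold with intersection metric g on a nonempty connected open set U ⊆ ℝ^n, and let Ω be a smooth nowhere-vanishing real function on U. Set h = Ω²g and h̃ = Ω²g̃, and assume the triple (h, h̃, E) is regular. Then the following statements are equivalent: (1) the pair (h, h̃) together with E is a weak quasi-homogeneous pencil; (2) g(E) ∧ dΩ = 0 on U, i.e. (Σ_j g_{ij}E^j)·∂_kΩ = (Σ_j g_{kj}E^j)·∂_iΩ for all indices i, k; (3) (U, •, h̃, E) is an F-manifold; (4) (U, •, h̃, E) is a weak F-manifold. -/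
open scoped BigOperators

noncomputable section

/-- Points of ℝⁿ. -/
abbrev Pt (n : ℕ) := Fin n → ℝ
/-- Vector fields (globally defined functions; conditions are imposed on an open set). -/
abbrev VF (n : ℕ) := Pt n → Fin n → ℝ
/-- 1-forms. -/
abbrev OneForm (n : ℕ) := Pt n → Fin n → ℝ
/-- Metrics: smooth maps into symmetric invertible matrices. -/
abbrev Met (n : ℕ) := Pt n → Matrix (Fin n) (Fin n) ℝ
/-- (1,2)-tensor fields (multiplications on tangent vectors): components `c t k i j` = c^k_{ij}(t). -/
abbrev Mul2 (n : ℕ) := Pt n → Fin n → Fin n → Fin n → ℝ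

variable {n : ℕ}

/-- Partial derivative ∂ᵢ f (t). -/
def pder (i : Fin n) (f : Pt n → ℝ) (t : Pt n) : ℝ :=
  fderiv ℝ f t (Pi.single i 1)

/-- Smoothness (on `U`) of a vector field or a 1-form. -/
def SmoothVF (U : Set (Pt n)) (X : VF n) : Prop :=
  ∀ k, ContDiffOn ℝ (⊤ : ℕ∞) (fun t => X t k) U

def SmoothMet (U : Set (Pt n)) (g : Met n) : Prop :=
  ∀ i j, ContDiffOn ℝ (⊤ : ℕ∞) (fun t => g t i j) U

def SmoothMul2 (U : Set (Pt n)) (c : Mul2 n) : Prop :=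
  ∀ k i j, ContDiffOn ℝ (⊤ : ℕ∞) (fun t => c t k i j) U

/-- `g` is a (pseudo-Riemannian) metric on `U`: smooth, symmetric, invertible. -/
def IsMetricOn (U : Set (Pt n)) (g : Met n) : Prop :=
  SmoothMet U g ∧ ∀ t ∈ U, (g t).IsSymm ∧ IsUnit (g t)

/-- The 1-form g(X). -/
def mdown (g : Met n) (X : VF n) : OneForm n := fun t k => ∑ j, g t k j * X t j
/-- The vector field g*α. -/
def mup (g : Met n) (α : OneForm n) : VF n := fun t k => ∑ j, (g t)⁻¹ k j * α t j
/-- g*(α, β). -/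
def mup2 (g : Met n) (α β : OneForm n) (t : Pt n) : ℝ :=
  ∑ i, ∑ j, (g t)⁻¹ i j * α t i * β t j
/-- g(X, Y). -/
def mdown2 (g : Met n) (X Y : VF n) (t : Pt n) : ℝ :=
  ∑ i, ∑ j, g t i j * X t i * Y t j

/-- Christoffel symbols Γ(g)^k_{ij}(t). -/
def chr (g : Met n) (k i j : Fin n) (t : Pt n) : ℝ :=
  (1/2) * ∑ l, (g t)⁻¹ k l *
    (pder i (fun s => g s j l) t + pder j (fun s => g s i l) t - pder l (fun s => g s i j) t)

/-- Levi-Civita covariant derivative ∇^g_X Y of a vector field. -/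
def covV (g : Met n) (X Y : VF n) : VF n :=
  fun t k => ∑ i, X t i * (pder i (fun s => Y s k) t + ∑ m, chr g k i m t * Y t m)

/-- Levi-Civita covariant derivative ∇^g_X α of a 1-form. -/
def covF (g : Met n) (X : VF n) (α : OneForm n) : OneForm n :=
  fun t k => ∑ i, X t i * (pder i (fun s => α s k) t - ∑ m, chr g m i k t * α t m)

/-- Lie bracket [X, Y]. -/
def vbr (X Y : VF n) : VF n :=
  fun t k => ∑ i, (X t i * pder i (fun s => Y s k) t - Y t i * pder i (fun s => X s k) t)

/-- Curvature R(g)_{X,Y} Z = ∇_X ∇_Y Z − ∇_Y ∇_X Z − ∇_{[X,Y]} Z. -/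
def curvV (g : Met n) (X Y Z : VF n) : VF n :=
  fun t k => covV g X (covV g Y Z) t k - covV g Y (covV g X Z) t k
    - covV g (vbr X Y) Z t k

/-- Curvature acting on 1-forms: (R(g)_{X,Y} α)(Z) = −α(R(g)_{X,Y} Z). -/
def curvF (g : Met n) (X Y : VF n) (α : OneForm n) : OneForm n :=
  fun t k => - ∑ m, α t m * curvV g X Y (fun _ => Pi.single k 1) t m

/-- `g` is flat on `U`: the curvature tensor vanishes identically. -/
def FlatOn (U : Set (Pt n)) (g : Met n) : Prop :=
  ∀ X Y Z : VF n, SmoothVF U X → SmoothVF U Y → SmoothVF U Z →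
    ∀ t ∈ U, ∀ k, curvV g X Y Z t k = 0

/-- `g` has constant sectional curvature `s` on `U`. -/
def ConstSecCurv (U : Set (Pt n)) (g : Met n) (s : ℝ) : Prop :=
  ∀ X Y : VF n, SmoothVF U X → SmoothVF U Y → ∀ t ∈ U,
    mdown2 g (curvV g X Y Y) X t
      = s * (mdown2 g X X t * mdown2 g Y Y t - (mdown2 g X Y t) ^ 2)

/-- The metric g_λ of the pencil: its inverse matrix is g⁻¹ + λ g̃⁻¹. -/
def pencil (g g' : Met n) (lam : ℝ) : Met n :=
  fun t => ((g t)⁻¹ + lam • (g' t)⁻¹)⁻¹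

/-- Almost compatibility of the pair (g, g̃) on `U`. -/
def AlmostCompatible (U : Set (Pt n)) (g g' : Met n) : Prop :=
  ∀ lam : ℝ, (∀ t ∈ U, IsUnit ((g t)⁻¹ + lam • (g' t)⁻¹)) →
    ∀ X : VF n, SmoothVF U X → ∀ α : OneForm n, SmoothVF U α →
      ∀ t ∈ U, ∀ k,
        mup (pencil g g' lam) (covF (pencil g g' lam) X α) t k
          = mup g (covF g X α) t k + lam * mup g' (covF g' X α) t k

/-- Compatibility of the pair (g, g̃) on `U`. -/
def Compatible (U : Set (Pt n)) (g g' : Met n) : Prop :=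
  AlmostCompatible U g g' ∧
  ∀ lam : ℝ, (∀ t ∈ U, IsUnit ((g t)⁻¹ + lam • (g' t)⁻¹)) →
    ∀ X Y : VF n, SmoothVF U X → SmoothVF U Y →
      ∀ α : OneForm n, SmoothVF U α →
        ∀ t ∈ U, ∀ k,
          mup (pencil g g' lam) (curvF (pencil g g' lam) X Y α) t k
            = mup g (curvF g X Y α) t k + lam * mup g' (curvF g' X Y α) t k

/-- The multiplication α ∘ β = ∇^g_{g*α} β − ∇^{g̃}_{g*α} β on 1-forms. -/
def circM (g g' : Met n) (α β : OneForm n) : OneForm n :=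
  fun t k => covF g (mup g α) β t k - covF g' (mup g α) β t k

/-- The endomorphism T(u) = g(E) ∘ u of 1-forms, as a pointwise matrix
(`∘` being tensorial in its second argument). -/
def Tmat (g g' : Met n) (E : VF n) (t : Pt n) : Matrix (Fin n) (Fin n) ℝ :=
  Matrix.of fun k m => circM g g' (mdown g E) (fun _ => Pi.single m 1) t k

/-- The triple (g, g̃, E) is regular on `U` if T is invertible at every point. -/
def RegularTriple (U : Set (Pt n)) (g g' : Met n) (E : VF n) : Prop :=
  ∀ t ∈ U, IsUnit (Tmat g g' E t)

/-- T⁻¹(v). -/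
def TinvF (g g' : Met n) (E : VF n) (v : OneForm n) : OneForm n :=
  fun t k => ∑ m, (Tmat g g' E t)⁻¹ k m * v t m

/-- The multiplication u • v = u ∘ T⁻¹(v) on 1-forms. -/
def bulF (g g' : Met n) (E : VF n) (u v : OneForm n) : OneForm n :=
  circM g g' u (TinvF g g' E v)

/-- The multiplication • on vector fields: X • Y = g̃*((g̃X) • (g̃Y)). -/
def bulV (g g' : Met n) (E : VF n) (X Y : VF n) : VF n :=
  mup g' (bulF g g' E (mdown g' X) (mdown g' Y))

/-- The multiplication • associated to the regular triple (g, g̃, E), as a (1,2)-tensor. -/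
def bulMul (g g' : Met n) (E : VF n) : Mul2 n :=
  fun t k i j => bulV g g' E (fun _ => Pi.single i 1) (fun _ => Pi.single j 1) t k

/-- Applying a (1,2)-tensor to vector fields. -/
def mapp (c : Mul2 n) (X Y : VF n) : VF n :=
  fun t k => ∑ i, ∑ j, c t k i j * X t i * Y t j

/-- Transporting a multiplication on tangent vectors to a multiplication
on 1-forms via the metric: u • v := g̃((g̃*u) • (g̃*v)). -/
def formMul (g' : Met n) (c : Mul2 n) (u v : OneForm n) : OneForm n :=
  mdown g' (mapp c (mup g' u) (mup g' v))

/-- Lie derivative of a function. -/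
def lieFun (E : VF n) (φ : Pt n → ℝ) : Pt n → ℝ :=
  fun t => ∑ i, E t i * pder i φ t

/-- Lie derivative of a 1-form: (L_E α)(X) = E(α(X)) − α([E,X]). -/
def lieOne (E : VF n) (α : OneForm n) : OneForm n :=
  fun t k => (∑ i, E t i * pder i (fun s => α s k) t) + ∑ i, α t i * pder k (fun s => E s i) t

/-- Lie derivative of a metric: (L_E g)(X,Y) = E(g(X,Y)) − g([E,X],Y) − g(X,[E,Y]). -/
def lieMet (E : VF n) (g : Met n) : Met n := fun t =>
  Matrix.of fun k j =>
    (∑ i, E t i * pder i (fun s => g s k j) t)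
    + (∑ i, g t i j * pder k (fun s => E s i) t)
    + (∑ i, g t k i * pder j (fun s => E s i) t)

/-- Lie derivative of a multiplication ((1,2)-tensor):
(L_E c)(u,v) = L_E(c(u,v)) − c(L_E u, v) − c(u, L_E v), componentwise. -/
def lieMul (E : VF n) (c : Mul2 n) : Mul2 n :=
  fun t k i j =>
    vbr E (mapp c (fun _ => Pi.single i 1) (fun _ => Pi.single j 1)) t k
    - mapp c (vbr E (fun _ => Pi.single i 1)) (fun _ => Pi.single j 1) t k
    - mapp c (fun _ => Pi.single i 1) (vbr E (fun _ => Pi.single j 1)) t k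

/-- Lie derivative of a multiplication on 1-forms (applied to the pencil multiplication ∘). -/
def lieCirc (E : VF n) (g g' : Met n) (u v : OneForm n) : OneForm n :=
  fun t k => lieOne E (circM g g' u v) t k - circM g g' (lieOne E u) v t k
    - circM g g' u (lieOne E v) t k

/-- ∇^g_X(•)(Y,Z) := ∇^g_X(Y•Z) − (∇^g_X Y)•Z − Y•(∇^g_X Z), for a multiplication c. -/
def covMul (g : Met n) (c : Mul2 n) (X Y Z : VF n) : VF n :=
  fun t k => covV g X (mapp c Y Z) t k - mapp c (covV g X Y) Z t k
    - mapp c Y (covV g X Z) t k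

/-- The (4,0)-tensor ∇^g(•)(X,Y,Z,V) := g(∇^g_X(•)(Y,Z), V). -/
def covMul4 (g : Met n) (c : Mul2 n) (X Y Z V : VF n) (t : Pt n) : ℝ :=
  mdown2 g (covMul g c X Y Z) V t

/-- Total symmetry of the (4,0)-tensor ∇^g(•) (the F-manifold condition). -/
def TotSym (U : Set (Pt n)) (g : Met n) (c : Mul2 n) : Prop :=
  ∀ X Y Z V : VF n, SmoothVF U X → SmoothVF U Y → SmoothVF U Z → SmoothVF U V →
    ∀ t ∈ U,
      covMul4 g c X Y Z V t = covMul4 g c Y X Z V t ∧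
      covMul4 g c X Y Z V t = covMul4 g c X Z Y V t ∧
      covMul4 g c X Y Z V t = covMul4 g c X Y V Z t

/-- Weak F-manifold structure (U, •, g̃, E), with identity `e`, •-inverse `Einv` of E,
and rescaling functions `Dt` (for the metric) and `k` (for the multiplication). -/
structure IsWeakF (U : Set (Pt n)) (c : Mul2 n) (g' : Met n) (E e Einv : VF n)
    (Dt k : Pt n → ℝ) : Prop where
  met : IsMetricOn U g'
  smooth_c : SmoothMul2 U c
  smooth_E : SmoothVF U E
  smooth_e : SmoothVF U e
  smooth_Einv : SmoothVF U Einv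
  smooth_Dt : ContDiffOn ℝ (⊤ : ℕ∞) Dt U
  smooth_k : ContDiffOn ℝ (⊤ : ℕ∞) k U
  comm : ∀ t ∈ U, ∀ a i j, c t a i j = c t a j i
  assoc : ∀ t ∈ U, ∀ a x y z, (∑ m, c t a m z * c t m x y) = ∑ m, c t a x m * c t m y z
  unit : ∀ t ∈ U, ∀ a i, (∑ j, c t a j i * e t j) = if a = i then (1 : ℝ) else 0
  invar : ∀ t ∈ U, ∀ x y z, (∑ m, g' t m z * c t m x y) = ∑ m, g' t x m * c t m y z
  lie_g : ∀ t ∈ U, ∀ i j, lieMet E g' t i j = Dt t * g' t i j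
  lie_c : ∀ t ∈ U, ∀ a i j, lieMul E c t a i j = k t * c t a i j
  e_inv : ∀ t ∈ U, ∀ a, (∑ i, ∑ j, c t a i j * E t i * Einv t j) = e t a
  sym_E : ∀ Y Z V : VF n, SmoothVF U Y → SmoothVF U Z → SmoothVF U V → ∀ t ∈ U,
    covMul4 g' c E Y Z V t = covMul4 g' c Y E Z V t

/-- Weak quasi-homogeneous pencil (h, h̃) with Euler vector field E. -/
structure IsWQH (U : Set (Pt n)) (h h' : Met n) (E : VF n) (D Dt : Pt n → ℝ) : Prop where
  met_h : IsMetricOn U h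
  met_h' : IsMetricOn U h'
  compat : Compatible U h h'
  smooth_E : SmoothVF U E
  smooth_D : ContDiffOn ℝ (⊤ : ℕ∞) D U
  smooth_Dt : ContDiffOn ℝ (⊤ : ℕ∞) Dt U
  lie_h' : ∀ t ∈ U, ∀ i j, lieMet E h' t i j = Dt t * h' t i j
  cov_E : ∀ X : VF n, SmoothVF U X → ∀ t ∈ U, ∀ a, covV h X E t a = (D t / 2) * X t a
  diff_const : ∃ c₀ : ℝ, ∀ t ∈ U, Dt t - D t = c₀

/-- Frobenius manifold structure (U, •, g̃, E). -/
structure IsFrob (U : Set (Pt n)) (c : Mul2 n) (g' : Met n) (E e : VF n) (D k : ℝ) : Prop where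
  met : IsMetricOn U g'
  flat : FlatOn U g'
  smooth_c : SmoothMul2 U c
  smooth_E : SmoothVF U E
  smooth_e : SmoothVF U e
  comm : ∀ t ∈ U, ∀ a i j, c t a i j = c t a j i
  assoc : ∀ t ∈ U, ∀ a x y z, (∑ m, c t a m z * c t m x y) = ∑ m, c t a x m * c t m y z
  unit : ∀ t ∈ U, ∀ a i, (∑ j, c t a j i * e t j) = if a = i then (1 : ℝ) else 0
  invar : ∀ t ∈ U, ∀ x y z, (∑ m, g' t m z * c t m x y) = ∑ m, g' t x m * c t m y z
  e_par : ∀ X : VF n, SmoothVF U X → ∀ t ∈ U, ∀ a, covV g' X e t a = 0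
  tot_sym : TotSym U g' c
  nabla2E : ∀ X Y : VF n, SmoothVF U X → SmoothVF U Y → ∀ t ∈ U, ∀ a,
    covV g' X (covV g' Y E) t a - covV g' (covV g' X Y) E t a = 0
  lie_g : ∀ t ∈ U, ∀ i j, lieMet E g' t i j = D * g' t i j
  lie_c : ∀ t ∈ U, ∀ a i j, lieMul E c t a i j = k * c t a i j

/-- The intersection metric `g` of a Frobenius manifold: g*g̃ = E•, together with
its standard properties. -/
structure IsIntersection (U : Set (Pt n)) (c : Mul2 n) (g g' : Met n) (E : VF n)
    (d : ℝ) : Prop where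
  met : IsMetricOn U g
  defn : ∀ t ∈ U, ∀ a j, (∑ l, (g t)⁻¹ a l * g' t l j) = ∑ i, c t a i j * E t i
  lie_g : ∀ t ∈ U, ∀ i j, lieMet E g t i j = (1 - d) * g t i j
  compat : Compatible U g g'
  regular : RegularTriple U g g' E
  mul_eq : ∀ t ∈ U, ∀ a i j, bulMul g g' E t a i j = c t a i j

/-! ### Calculus of partial derivatives on an open set -/

section Calculus

variable {U : Set (Pt n)} {t : Pt n}

theorem ContDiffOn.differentiableAt_of_isOpen {f : Pt n → ℝ} (hU : IsOpen U)
    (hf : ContDiffOn ℝ (⊤ : ℕ∞) f U) (ht : t ∈ U) : DifferentiableAt ℝ f t :=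
  (hf.differentiableOn (by simp)).differentiableAt (hU.mem_nhds ht)

theorem pder_congr {f₁ f₂ : Pt n → ℝ} (hU : IsOpen U) (ht : t ∈ U)
    (h : ∀ s ∈ U, f₁ s = f₂ s) (i : Fin n) : pder i f₁ t = pder i f₂ t := by
  unfold pder
  rw [Filter.EventuallyEq.fderiv_eq (Filter.eventuallyEq_of_mem (hU.mem_nhds ht) h)]

theorem pder_mul {f₁ f₂ : Pt n → ℝ} (h₁ : DifferentiableAt ℝ f₁ t)
    (h₂ : DifferentiableAt ℝ f₂ t) (i : Fin n) :
    pder i (fun s => f₁ s * f₂ s) t = pder i f₁ t * f₂ t + f₁ t * pder i f₂ t := by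
  unfold pder
  rw [fderiv_fun_mul h₁ h₂]
  simp
  ring

theorem pder_add {f₁ f₂ : Pt n → ℝ} (h₁ : DifferentiableAt ℝ f₁ t)
    (h₂ : DifferentiableAt ℝ f₂ t) (i : Fin n) :
    pder i (fun s => f₁ s + f₂ s) t = pder i f₁ t + pder i f₂ t := by
  unfold pder
  rw [fderiv_fun_add h₁ h₂]
  simp

theorem pder_sub {f₁ f₂ : Pt n → ℝ} (h₁ : DifferentiableAt ℝ f₁ t)
    (h₂ : DifferentiableAt ℝ f₂ t) (i : Fin n) :
    pder i (fun s => f₁ s - f₂ s) t = pder i f₁ t - pder i f₂ t := by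
  unfold pder
  rw [fderiv_fun_sub h₁ h₂]
  simp

theorem pder_sum {ι : Type*} (S : Finset ι) {f : ι → Pt n → ℝ}
    (h : ∀ j ∈ S, DifferentiableAt ℝ (f j) t) (i : Fin n) :
    pder i (fun s => ∑ j ∈ S, f j s) t = ∑ j ∈ S, pder i (f j) t := by
  unfold pder
  rw [fderiv_fun_sum h]
  simp

theorem ContDiffOn.pder {f : Pt n → ℝ} (hU : IsOpen U)
    (hf : ContDiffOn ℝ (⊤ : ℕ∞) f U) (i : Fin n) :
    ContDiffOn ℝ (⊤ : ℕ∞) (pder i f) U :=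
  (hf.fderiv_of_isOpen hU (by simp)).clm_apply contDiffOn_const

theorem pder_pder_comm {f : Pt n → ℝ} (hU : IsOpen U)
    (hf : ContDiffOn ℝ (⊤ : ℕ∞) f U) (ht : t ∈ U) (i j : Fin n) :
    pder i (pder j f) t = pder j (pder i f) t := by
  have hd : DifferentiableAt ℝ (fderiv ℝ f) t :=
    ((hf.fderiv_of_isOpen (m := 1) hU (by norm_cast)).differentiableOn
      (by simp)).differentiableAt (hU.mem_nhds ht)
  have key : ∀ a b : Fin n, pder a (pder b f) t
      = fderiv ℝ (fderiv ℝ f) t (Pi.single a 1) (Pi.single b 1) := by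
    intro a b
    unfold pder
    rw [fderiv_clm_apply hd (by fun_prop)]
    simp
  rw [key, key]
  refine ((hf.contDiffAt (hU.mem_nhds ht)).isSymmSndFDerivAt ?_) _ _
  simp only [minSmoothness_of_isRCLikeNormedField]
  norm_cast

theorem lieFun_congr {f₁ f₂ : Pt n → ℝ} (hU : IsOpen U) (ht : t ∈ U)
    (h : ∀ s ∈ U, f₁ s = f₂ s) (X : VF n) : lieFun X f₁ t = lieFun X f₂ t := by
  simp only [lieFun, pder_congr hU ht h]

theorem lieFun_mul {f₁ f₂ : Pt n → ℝ} (h₁ : DifferentiableAt ℝ f₁ t)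
    (h₂ : DifferentiableAt ℝ f₂ t) (X : VF n) :
    lieFun X (fun s => f₁ s * f₂ s) t = lieFun X f₁ t * f₂ t + f₁ t * lieFun X f₂ t := by
  simp only [lieFun, pder_mul h₁ h₂, Finset.sum_mul, Finset.mul_sum,
    ← Finset.sum_add_distrib]
  exact Finset.sum_congr rfl fun i _ => by ring

theorem lieFun_add {f₁ f₂ : Pt n → ℝ} (h₁ : DifferentiableAt ℝ f₁ t)
    (h₂ : DifferentiableAt ℝ f₂ t) (X : VF n) :
    lieFun X (fun s => f₁ s + f₂ s) t = lieFun X f₁ t + lieFun X f₂ t := by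
  simp only [lieFun, pder_add h₁ h₂, mul_add, Finset.sum_add_distrib]

theorem lieFun_sub {f₁ f₂ : Pt n → ℝ} (h₁ : DifferentiableAt ℝ f₁ t)
    (h₂ : DifferentiableAt ℝ f₂ t) (X : VF n) :
    lieFun X (fun s => f₁ s - f₂ s) t = lieFun X f₁ t - lieFun X f₂ t := by
  simp only [lieFun, pder_sub h₁ h₂, mul_sub, Finset.sum_sub_distrib]

theorem lieFun_sum {ι : Type*} (S : Finset ι) {f : ι → Pt n → ℝ}
    (h : ∀ j ∈ S, DifferentiableAt ℝ (f j) t) (X : VF n) :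
    lieFun X (fun s => ∑ j ∈ S, f j s) t = ∑ j ∈ S, lieFun X (f j) t := by
  simp only [lieFun, pder_sum S h, Finset.mul_sum]
  exact Finset.sum_comm

theorem ContDiffOn.sum_mul {ι : Type*} (S : Finset ι) {f₁ f₂ : ι → Pt n → ℝ}
    (h₁ : ∀ j, ContDiffOn ℝ (⊤ : ℕ∞) (f₁ j) U) (h₂ : ∀ j, ContDiffOn ℝ (⊤ : ℕ∞) (f₂ j) U) :
    ContDiffOn ℝ (⊤ : ℕ∞) (fun s => ∑ j ∈ S, f₁ j s * f₂ j s) U :=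
  ContDiffOn.sum fun j _ => (h₁ j).mul (h₂ j)

end Calculus

/-! ### Metrics -/

section Metrics

open scoped Matrix

variable {U : Set (Pt n)} {t : Pt n} {G : Met n}

theorem IsMetricOn.differentiableAt (hU : IsOpen U) (hG : IsMetricOn U G) (ht : t ∈ U)
    (i j : Fin n) : DifferentiableAt ℝ (fun s => G s i j) t :=
  (hG.1 i j).differentiableAt_of_isOpen hU ht

theorem IsMetricOn.apply_comm (hG : IsMetricOn U G) (ht : t ∈ U) (i j : Fin n) :
    G t i j = G t j i :=
  ((hG.2 t ht).1.apply i j).symm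

theorem IsMetricOn.inv_apply_comm (hG : IsMetricOn U G) (ht : t ∈ U) (i j : Fin n) :
    (G t)⁻¹ i j = (G t)⁻¹ j i := by
  have h := Matrix.transpose_nonsing_inv (G t)
  rw [(hG.2 t ht).1] at h
  exact (congrFun (congrFun h j) i)

theorem IsMetricOn.isUnit_det (hG : IsMetricOn U G) (ht : t ∈ U) : IsUnit (G t).det :=
  (Matrix.isUnit_iff_isUnit_det _).1 (hG.2 t ht).2

theorem IsMetricOn.sum_inv_mul (hG : IsMetricOn U G) (ht : t ∈ U) (i j : Fin n) :
    ∑ l, (G t)⁻¹ i l * G t l j = if i = j then 1 else 0 := by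
  have h := congrFun (congrFun (Matrix.nonsing_inv_mul _ (hG.isUnit_det ht)) i) j
  rwa [Matrix.mul_apply, Matrix.one_apply] at h

theorem mdown_eq_mulVec (G : Met n) (X : VF n) (t : Pt n) : mdown G X t = G t *ᵥ X t := rfl

theorem mup_eq_mulVec (G : Met n) (α : OneForm n) (t : Pt n) :
    mup G α t = (G t)⁻¹ *ᵥ α t := rfl

theorem mdown2_eq_dotProduct (G : Met n) (X Y : VF n) (t : Pt n) :
    mdown2 G X Y t = X t ⬝ᵥ mdown G Y t := by
  simp only [mdown2, dotProduct, mdown, Finset.mul_sum]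
  exact Finset.sum_congr rfl fun i _ => Finset.sum_congr rfl fun j _ => by ring

theorem mup2_eq_dotProduct (G : Met n) (α β : OneForm n) (t : Pt n) :
    mup2 G α β t = α t ⬝ᵥ mup G β t := by
  simp only [mup2, dotProduct, mup, Finset.mul_sum]
  exact Finset.sum_congr rfl fun i _ => Finset.sum_congr rfl fun j _ => by ring

theorem IsMetricOn.mdown_mup (hG : IsMetricOn U G) (ht : t ∈ U) (α : OneForm n) :
    mdown G (mup G α) t = α t := by
  rw [mdown_eq_mulVec, mup_eq_mulVec, Matrix.mulVec_mulVec,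
    Matrix.mul_nonsing_inv _ (hG.isUnit_det ht), Matrix.one_mulVec]

theorem IsMetricOn.mup_mdown (hG : IsMetricOn U G) (ht : t ∈ U) (X : VF n) :
    mup G (mdown G X) t = X t := by
  rw [mup_eq_mulVec, mdown_eq_mulVec, Matrix.mulVec_mulVec,
    Matrix.nonsing_inv_mul _ (hG.isUnit_det ht), Matrix.one_mulVec]

theorem IsMetricOn.mdown2_comm (hG : IsMetricOn U G) (ht : t ∈ U) (X Y : VF n) :
    mdown2 G X Y t = mdown2 G Y X t := by
  simp only [mdown2]
  rw [Finset.sum_comm]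
  exact Finset.sum_congr rfl fun i _ => Finset.sum_congr rfl fun j _ => by
    rw [hG.apply_comm ht]; ring

theorem IsMetricOn.mdown2_mup (hG : IsMetricOn U G) (ht : t ∈ U) (X : VF n) (α : OneForm n) :
    mdown2 G X (mup G α) t = α t ⬝ᵥ X t := by
  rw [mdown2_eq_dotProduct, hG.mdown_mup ht, dotProduct_comm]

theorem IsMetricOn.contDiffOn_det (hG : IsMetricOn U G) :
    ContDiffOn ℝ (⊤ : ℕ∞) (fun s => (G s).det) U := by
  simp only [Matrix.det_apply']
  exact ContDiffOn.sum fun σ _ => contDiffOn_const.mul (contDiffOn_prod fun i _ => hG.1 _ _)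

theorem IsMetricOn.contDiffOn_inv (hG : IsMetricOn U G) (i j : Fin n) :
    ContDiffOn ℝ (⊤ : ℕ∞) (fun s => (G s)⁻¹ i j) U := by
  have hadj : ContDiffOn ℝ (⊤ : ℕ∞) (fun s => (G s).adjugate i j) U := by
    simp only [Matrix.adjugate_apply, Matrix.det_apply']
    refine ContDiffOn.sum fun σ _ => contDiffOn_const.mul (contDiffOn_prod fun a _ => ?_)
    by_cases h : σ a = j
    · simpa [Matrix.updateRow_apply, h] using contDiffOn_const
    · simpa [Matrix.updateRow_apply, h] using hG.1 _ _
  refine ((hG.contDiffOn_det.inv fun s hs => (hG.isUnit_det hs).ne_zero).mul hadj).congr ?_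
  intro s _
  simp [Matrix.inv_def]

theorem IsMetricOn.contDiffOn_chr (hU : IsOpen U) (hG : IsMetricOn U G) (k i j : Fin n) :
    ContDiffOn ℝ (⊤ : ℕ∞) (chr G k i j) U :=
  contDiffOn_const.mul (ContDiffOn.sum_mul _ (fun l => hG.contDiffOn_inv k l) fun l =>
    (((hG.1 j l).pder hU i).add ((hG.1 i l).pder hU j)).sub ((hG.1 i j).pder hU l))

/-- Christoffel symbols of the first kind. -/
theorem IsMetricOn.sum_mul_chr (hG : IsMetricOn U G) (ht : t ∈ U) (l i j : Fin n) :
    ∑ k, G t l k * chr G k i j t = (1 / 2) * (pder i (fun s => G s j l) t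
      + pder j (fun s => G s i l) t - pder l (fun s => G s i j) t) := by
  set A : Fin n → ℝ := fun l => pder i (fun s => G s j l) t
      + pder j (fun s => G s i l) t - pder l (fun s => G s i j) t
  have h : (fun k => chr G k i j t) = (1 / 2 : ℝ) • ((G t)⁻¹ *ᵥ A) := rfl
  change (G t *ᵥ fun k => chr G k i j t) l = 1 / 2 * A l
  rw [h, Matrix.mulVec_smul, Matrix.mulVec_mulVec,
    Matrix.mul_nonsing_inv _ (hG.isUnit_det ht), Matrix.one_mulVec]
  rfl

theorem IsMetricOn.chr_comm (hU : IsOpen U) (hG : IsMetricOn U G) (ht : t ∈ U)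
    (k i j : Fin n) : chr G k i j t = chr G k j i t := by
  simp only [chr]
  congr 1
  refine Finset.sum_congr rfl fun l _ => ?_
  rw [pder_congr hU ht (fun s hs => hG.apply_comm hs i j)]
  ring

/-- The metric is parallel for its Levi-Civita connection, in coordinates. -/
theorem IsMetricOn.pder_eq_chr (hU : IsOpen U) (hG : IsMetricOn U G) (ht : t ∈ U)
    (i k j : Fin n) : pder i (fun s => G s k j) t
      = ∑ m, chr G m i k t * G t m j + ∑ m, chr G m i j t * G t k m := by
  have h1 := hG.sum_mul_chr ht j i k
  have h2 := hG.sum_mul_chr ht k i j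
  rw [show ∑ m, chr G m i k t * G t m j = ∑ m, G t j m * chr G m i k t from
    Finset.sum_congr rfl fun m _ => by rw [hG.apply_comm ht]; ring, h1,
    show ∑ m, chr G m i j t * G t k m = ∑ m, G t k m * chr G m i j t from
    Finset.sum_congr rfl fun m _ => mul_comm _ _, h2,
    pder_congr hU ht (fun s hs => hG.apply_comm hs j k)]
  ring

end Metrics

/-! ### The Levi-Civita connection -/

section LeviCivita

open scoped Matrix

variable {U : Set (Pt n)} {t : Pt n} {G : Met n}

theorem SmoothVF.differentiableAt {X : VF n} (hU : IsOpen U) (hX : SmoothVF U X) (ht : t ∈ U)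
    (k : Fin n) : DifferentiableAt ℝ (fun s => X s k) t :=
  (hX k).differentiableAt_of_isOpen hU ht

theorem smoothVF_const (U : Set (Pt n)) (v : Fin n → ℝ) : SmoothVF U (fun _ => v) :=
  fun _ => contDiffOn_const

theorem SmoothVF.mdown {X : VF n} (hG : IsMetricOn U G) (hX : SmoothVF U X) :
    SmoothVF U (mdown G X) :=
  fun k => ContDiffOn.sum_mul _ (fun j => hG.1 k j) hX

theorem SmoothVF.mup {α : OneForm n} (hG : IsMetricOn U G) (hα : SmoothVF U α) :
    SmoothVF U (mup G α) :=
  fun k => ContDiffOn.sum_mul _ (fun j => hG.contDiffOn_inv k j) hα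

theorem SmoothVF.dotProduct {α : OneForm n} {X : VF n} (hα : SmoothVF U α) (hX : SmoothVF U X) :
    ContDiffOn ℝ (⊤ : ℕ∞) (fun s => α s ⬝ᵥ X s) U :=
  ContDiffOn.sum_mul _ hα hX

theorem SmoothVF.mdown2 {X Y : VF n} (hG : IsMetricOn U G) (hX : SmoothVF U X)
    (hY : SmoothVF U Y) : ContDiffOn ℝ (⊤ : ℕ∞) (mdown2 G X Y) U :=
  (hX.dotProduct (hY.mdown hG)).congr fun s _ => mdown2_eq_dotProduct G X Y s

theorem covV_eq (G : Met n) (X Y : VF n) (t : Pt n) (k : Fin n) :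
    covV G X Y t k = lieFun X (fun s => Y s k) t
      + ∑ i, ∑ m, chr G k i m t * X t i * Y t m := by
  simp only [covV, lieFun, mul_add, Finset.sum_add_distrib, Finset.mul_sum]
  congr 1
  exact Finset.sum_congr rfl fun i _ => Finset.sum_congr rfl fun m _ => by ring

theorem covV_single (G : Met n) (j : Fin n) (Y : VF n) (t : Pt n) (k : Fin n) :
    covV G (fun _ => Pi.single j 1) Y t k
      = pder j (fun s => Y s k) t + ∑ m, chr G k j m t * Y t m := by
  simp [covV, Pi.single_apply]

theorem covF_eq (G : Met n) (X : VF n) (α : OneForm n) (t : Pt n) (k : Fin n) :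
    covF G X α t k = lieFun X (fun s => α s k) t
      - ∑ i, ∑ m, chr G m i k t * X t i * α t m := by
  simp only [covF, lieFun, mul_sub, Finset.sum_sub_distrib, Finset.mul_sum]
  congr 1
  exact Finset.sum_congr rfl fun i _ => Finset.sum_congr rfl fun m _ => by ring

theorem SmoothVF.covV {X Y : VF n} (hU : IsOpen U) (hG : IsMetricOn U G) (hX : SmoothVF U X)
    (hY : SmoothVF U Y) : SmoothVF U (covV G X Y) :=
  fun k => ContDiffOn.sum_mul _ hX fun i => ((hY k).pder hU i).add
    (ContDiffOn.sum_mul _ (fun m => hG.contDiffOn_chr hU k i m) hY)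

theorem covV_congr {Y Y' : VF n} (hU : IsOpen U) (ht : t ∈ U) (h : ∀ s ∈ U, Y s = Y' s)
    (G : Met n) (X : VF n) : covV G X Y t = covV G X Y' t := by
  funext k
  rw [covV_eq, covV_eq, h t ht, lieFun_congr hU ht fun s hs => by rw [h s hs]]

theorem covV_add {Y Y' : VF n} (hU : IsOpen U) (ht : t ∈ U) (hY : SmoothVF U Y)
    (hY' : SmoothVF U Y') (G : Met n) (X : VF n) :
    covV G X (fun s => Y s + Y' s) t = covV G X Y t + covV G X Y' t := by
  funext k
  simp only [covV_eq, Pi.add_apply, mul_add, Finset.sum_add_distrib,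
    lieFun_add (hY.differentiableAt hU ht k) (hY'.differentiableAt hU ht k)]
  ring

theorem covV_sub {Y Y' : VF n} (hU : IsOpen U) (ht : t ∈ U) (hY : SmoothVF U Y)
    (hY' : SmoothVF U Y') (G : Met n) (X : VF n) :
    covV G X (fun s => Y s - Y' s) t = covV G X Y t - covV G X Y' t := by
  funext k
  simp only [covV_eq, Pi.sub_apply, mul_sub, Finset.sum_sub_distrib,
    lieFun_sub (hY.differentiableAt hU ht k) (hY'.differentiableAt hU ht k)]
  ring

theorem covV_smul {f : Pt n → ℝ} {Y : VF n} (hU : IsOpen U) (ht : t ∈ U)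
    (hf : ContDiffOn ℝ (⊤ : ℕ∞) f U) (hY : SmoothVF U Y) (G : Met n) (X : VF n) :
    covV G X (fun s => f s • Y s) t = lieFun X f t • Y t + f t • covV G X Y t := by
  funext k
  simp only [covV_eq, Pi.smul_apply, Pi.add_apply, smul_eq_mul,
    lieFun_mul (hf.differentiableAt_of_isOpen hU ht) (hY.differentiableAt hU ht k),
    mul_add, Finset.mul_sum, add_assoc]
  congr 2
  exact Finset.sum_congr rfl fun i _ => Finset.sum_congr rfl fun m _ => by ring

theorem IsMetricOn.vbr_eq (hU : IsOpen U) (hG : IsMetricOn U G) (ht : t ∈ U) (X Y : VF n) :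
    vbr X Y t = covV G X Y t - covV G Y X t := by
  funext k
  have h : ∑ i, ∑ m, chr G k i m t * Y t i * X t m
      = ∑ i, ∑ m, chr G k i m t * X t i * Y t m := by
    rw [Finset.sum_comm]
    exact Finset.sum_congr rfl fun i _ => Finset.sum_congr rfl fun m _ => by
      rw [hG.chr_comm hU ht]; ring
  rw [Pi.sub_apply, covV_eq, covV_eq, h]
  simp only [vbr, lieFun, Finset.sum_sub_distrib]
  ring

theorem lieFun_dotProduct {α : OneForm n} {Y : VF n} (hU : IsOpen U) (ht : t ∈ U)
    (hα : SmoothVF U α) (hY : SmoothVF U Y) (G : Met n) (X : VF n) :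
    lieFun X (fun s => α s ⬝ᵥ Y s) t = covF G X α t ⬝ᵥ Y t + α t ⬝ᵥ covV G X Y t := by
  have hd := fun k => hα.differentiableAt hU ht k
  have hd' := fun k => hY.differentiableAt hU ht k
  have h : ∑ k, (∑ i, ∑ m, chr G m i k t * X t i * α t m) * Y t k
      = ∑ k, α t k * ∑ i, ∑ m, chr G k i m t * X t i * Y t m := by
    simp only [Finset.sum_mul, Finset.mul_sum]
    rw [Finset.sum_comm]
    conv_rhs => rw [Finset.sum_comm]
    refine Finset.sum_congr rfl fun i _ => ?_
    rw [Finset.sum_comm]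
    exact Finset.sum_congr rfl fun m _ => Finset.sum_congr rfl fun k _ => by ring
  simp only [dotProduct, covF_eq, covV_eq]
  rw [lieFun_sum _ fun k _ => (hd k).fun_mul (hd' k)]
  simp only [lieFun_mul (hd _) (hd' _), sub_mul, mul_add, Finset.sum_add_distrib,
    Finset.sum_sub_distrib, h]
  ring

/-- Lowering an index commutes with the Levi-Civita connection. -/
theorem IsMetricOn.covF_mdown (hU : IsOpen U) (hG : IsMetricOn U G) (ht : t ∈ U) (X : VF n)
    {Y : VF n} (hY : SmoothVF U Y) : covF G X (mdown G Y) t = mdown G (covV G X Y) t := by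
  funext k
  have hd := fun j => hG.differentiableAt hU ht k j
  have hd' := fun j => hY.differentiableAt hU ht j
  simp only [covF, mdown, covV]
  have h : ∀ i, pder i (fun s => ∑ j, G s k j * Y s j) t
        - ∑ m, chr G m i k t * ∑ j, G t m j * Y t j
      = ∑ j, G t k j * (pder i (fun s => Y s j) t + ∑ m, chr G j i m t * Y t m) := by
    intro i
    have h1 : ∑ j, (∑ m, chr G m i k t * G t m j) * Y t j
        = ∑ m, chr G m i k t * ∑ j, G t m j * Y t j := by
      simp only [Finset.sum_mul, Finset.mul_sum]
      rw [Finset.sum_comm]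
      exact Finset.sum_congr rfl fun i _ => Finset.sum_congr rfl fun m _ => by ring
    have h2 : ∑ j, (∑ m, chr G m i j t * G t k m) * Y t j
        = ∑ j, G t k j * ∑ m, chr G j i m t * Y t m := by
      simp only [Finset.sum_mul, Finset.mul_sum]
      rw [Finset.sum_comm]
      exact Finset.sum_congr rfl fun i _ => Finset.sum_congr rfl fun m _ => by ring
    rw [pder_sum _ fun j _ => (hd j).fun_mul (hd' j)]
    simp only [pder_mul (hd _) (hd' _), hG.pder_eq_chr hU ht, add_mul, mul_add,
      Finset.sum_add_distrib, h1, h2]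
    ring
  simp only [h]
  simp only [Finset.mul_sum]
  rw [Finset.sum_comm]
  exact Finset.sum_congr rfl fun i _ => Finset.sum_congr rfl fun m _ => by ring

theorem covF_congr {α α' : OneForm n} (hU : IsOpen U) (ht : t ∈ U) (h : ∀ s ∈ U, α s = α' s)
    (G : Met n) (X : VF n) : covF G X α t = covF G X α' t := by
  funext k
  rw [covF_eq, covF_eq, h t ht, lieFun_congr hU ht fun s hs => by rw [h s hs]]

/-- Raising an index commutes with the Levi-Civita connection. -/
theorem IsMetricOn.covV_mup (hU : IsOpen U) (hG : IsMetricOn U G) (ht : t ∈ U) (X : VF n)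
    {α : OneForm n} (hα : SmoothVF U α) : covV G X (mup G α) t = mup G (covF G X α) t := by
  have h := hG.covF_mdown hU ht X (hα.mup hG)
  rw [covF_congr hU ht (fun s hs => hG.mdown_mup hs α)] at h
  rw [mup_eq_mulVec, h, ← mup_eq_mulVec, hG.mup_mdown ht]

theorem IsMetricOn.lieFun_mdown2 (hU : IsOpen U) (hG : IsMetricOn U G) (ht : t ∈ U) (X : VF n)
    {Y Z : VF n} (hY : SmoothVF U Y) (hZ : SmoothVF U Z) :
    lieFun X (mdown2 G Y Z) t = mdown2 G (covV G X Y) Z t + mdown2 G Y (covV G X Z) t := by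
  rw [lieFun_congr hU ht (fun s hs => (hG.mdown2_comm hs Y Z).trans
    ((mdown2_eq_dotProduct G Z Y s).trans (dotProduct_comm _ _))),
    lieFun_dotProduct hU ht (hY.mdown hG) hZ G, hG.covF_mdown hU ht X hY,
    hG.mdown2_comm ht, hG.mdown2_comm ht Y, mdown2_eq_dotProduct, mdown2_eq_dotProduct,
    dotProduct_comm, dotProduct_comm (mdown G Y t)]

theorem IsMetricOn.covF_dotProduct_comm (hU : IsOpen U) (hG : IsMetricOn U G) (ht : t ∈ U)
    {α : OneForm n} (hα : ∀ i j, pder i (fun s => α s j) t = pder j (fun s => α s i) t)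
    (X Y : VF n) : covF G X α t ⬝ᵥ Y t = covF G Y α t ⬝ᵥ X t := by
  simp only [dotProduct, covF, Finset.sum_mul]
  rw [Finset.sum_comm]
  refine Finset.sum_congr rfl fun i _ => Finset.sum_congr rfl fun k _ => ?_
  rw [hα i k, Finset.sum_congr rfl fun m _ => by rw [hG.chr_comm hU ht]]
  ring

/-- The lowered covariant derivative splits into the Lie derivative of the metric and the
exterior derivative of the lowered vector field. -/
theorem IsMetricOn.two_mul_mdown_covV_single (hU : IsOpen U) (hG : IsMetricOn U G) (ht : t ∈ U)
    {E : VF n} (hE : SmoothVF U E) (i j : Fin n) :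
    2 * mdown G (covV G (fun _ => Pi.single j 1) E) t i = lieMet E G t i j
      + (pder j (fun s => mdown G E s i) t - pder i (fun s => mdown G E s j) t) := by
  have hd := fun k j => hG.differentiableAt hU ht k j
  have hd' := fun j => hE.differentiableAt hU ht j
  have hp : ∀ a b, pder a (fun s => mdown G E s b) t
      = ∑ m, pder a (fun s => G s b m) t * E t m
        + ∑ m, G t b m * pder a (fun s => E s m) t := by
    intro a b
    simp only [mdown]
    rw [pder_sum _ fun j _ => (hd b j).fun_mul (hd' j)]
    simp only [pder_mul (hd _ _) (hd' _), Finset.sum_add_distrib]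
  have hl : mdown G (covV G (fun _ => Pi.single j 1) E) t i
      = ∑ m, G t i m * pder j (fun s => E s m) t
        + ∑ m, (∑ l, G t i l * chr G l j m t) * E t m := by
    simp only [mdown, covV_single, mul_add, Finset.sum_add_distrib, Finset.mul_sum,
      Finset.sum_mul]
    congr 1
    rw [Finset.sum_comm]
    exact Finset.sum_congr rfl fun i _ => Finset.sum_congr rfl fun m _ => by ring
  have hc : ∀ m, G t m j = G t j m := fun m => hG.apply_comm ht m j
  have h3 : ∑ m, pder m (fun s => G s j i) t * E t m
      = ∑ m, E t m * pder m (fun s => G s i j) t :=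
    Finset.sum_congr rfl fun m _ => by
      rw [pder_congr hU ht (fun s hs => hG.apply_comm hs j i), mul_comm]
  rw [hp, hp, hl]
  simp only [hG.sum_mul_chr ht, lieMet, Matrix.of_apply, hc]
  have h4 : ∑ m, (1 / 2) * (pder j (fun s => G s m i) t + pder m (fun s => G s j i) t
      - pder i (fun s => G s j m) t) * E t m
      = (1 / 2) * (∑ m, pder j (fun s => G s i m) t * E t m
        + ∑ m, pder m (fun s => G s j i) t * E t m
        - ∑ m, pder i (fun s => G s j m) t * E t m) := by
    rw [← Finset.sum_add_distrib, ← Finset.sum_sub_distrib, Finset.mul_sum]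
    exact Finset.sum_congr rfl fun m _ => by
      rw [pder_congr hU ht (fun s hs => hG.apply_comm hs m i)]; ring
  rw [h4, h3]
  ring

end LeviCivita

/-! ### Conformal changes of a metric -/

section Conformal

open scoped Matrix

variable {U : Set (Pt n)} {t : Pt n} {G H : Met n} {Ω : Pt n → ℝ}

/-- The logarithmic differential `dΩ / Ω`. -/
def dlog (Ω : Pt n → ℝ) : OneForm n := fun t i => pder i Ω t / Ω t

/-- `H = Ω² G` on `U`, with `G` a metric and `Ω` a smooth nowhere-vanishing function. -/
structure IsConformalOn (U : Set (Pt n)) (Ω : Pt n → ℝ) (G H : Met n) : Prop where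
  isOpen : IsOpen U
  met : IsMetricOn U G
  smooth : ContDiffOn ℝ (⊤ : ℕ∞) Ω U
  ne_zero : ∀ t ∈ U, Ω t ≠ 0
  eq : ∀ t ∈ U, H t = Ω t ^ 2 • G t

theorem smoothVF_dlog (hU : IsOpen U) (hΩ : ContDiffOn ℝ (⊤ : ℕ∞) Ω U)
    (hΩ0 : ∀ t ∈ U, Ω t ≠ 0) : SmoothVF U (dlog Ω) :=
  fun i => (hΩ.pder hU i).div hΩ hΩ0

theorem pder_dlog_comm (hU : IsOpen U) (hΩ : ContDiffOn ℝ (⊤ : ℕ∞) Ω U)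
    (hΩ0 : ∀ t ∈ U, Ω t ≠ 0) (ht : t ∈ U) (i j : Fin n) :
    pder i (fun s => dlog Ω s j) t = pder j (fun s => dlog Ω s i) t := by
  have hm : ∀ a b, pder a (pder b Ω) t
      = pder a (fun s => dlog Ω s b) t * Ω t + dlog Ω t b * pder a Ω t := fun a b => by
    rw [← pder_mul ((smoothVF_dlog hU hΩ hΩ0).differentiableAt hU ht b)
      (hΩ.differentiableAt_of_isOpen hU ht)]
    refine pder_congr hU ht (fun s hs => ?_) a
    have := hΩ0 s hs
    simp only [dlog]
    field_simp
  have h0 := hΩ0 t ht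
  have h := pder_pder_comm hU hΩ ht i j
  rw [hm, hm] at h
  refine mul_right_cancel₀ h0 ?_
  simp only [dlog] at h ⊢
  linear_combination h

theorem pder_sq_mul {f : Pt n → ℝ} (hΩ : DifferentiableAt ℝ Ω t) (h0 : Ω t ≠ 0)
    (hf : DifferentiableAt ℝ f t) (i : Fin n) :
    pder i (fun s => Ω s ^ 2 * f s) t
      = Ω t ^ 2 * (pder i f t + 2 * dlog Ω t i * f t) := by
  simp only [pow_two]
  rw [pder_mul (hΩ.fun_mul hΩ) hf, pder_mul hΩ hΩ, dlog]
  field_simp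
  ring

namespace IsConformalOn

theorem smooth_dlog (h : IsConformalOn U Ω G H) : SmoothVF U (dlog Ω) :=
  smoothVF_dlog h.isOpen h.smooth h.ne_zero

theorem apply_eq (h : IsConformalOn U Ω G H) (ht : t ∈ U) (i j : Fin n) :
    H t i j = Ω t ^ 2 * G t i j := by
  rw [h.eq t ht, Matrix.smul_apply, smul_eq_mul]

theorem inv_eq (h : IsConformalOn U Ω G H) (ht : t ∈ U) :
    (H t)⁻¹ = (Ω t ^ 2)⁻¹ • (G t)⁻¹ := by
  have h0 := h.ne_zero t ht
  rw [h.eq t ht]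
  refine Matrix.inv_eq_right_inv ?_
  rw [Matrix.smul_mul, Matrix.mul_smul, smul_smul,
    Matrix.mul_nonsing_inv _ (h.met.isUnit_det ht), mul_inv_cancel₀ (pow_ne_zero 2 h0), one_smul]

theorem met' (h : IsConformalOn U Ω G H) : IsMetricOn U H := by
  refine ⟨fun i j => ((h.smooth.pow 2).mul (h.met.1 i j)).congr fun s hs => h.apply_eq hs i j,
    fun s hs => ⟨?_, ?_⟩⟩
  · rw [h.eq s hs]
    exact (h.met.2 s hs).1.smul _
  · rw [h.eq s hs, Matrix.isUnit_iff_isUnit_det, Matrix.det_smul]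
    exact ((pow_ne_zero 2 (h.ne_zero s hs)).isUnit.pow _).mul (h.met.isUnit_det hs)

theorem mdown2_eq (h : IsConformalOn U Ω G H) (ht : t ∈ U) (X Y : VF n) :
    mdown2 H X Y t = Ω t ^ 2 * mdown2 G X Y t := by
  simp only [mdown2, h.apply_eq ht, Finset.mul_sum, mul_assoc]

theorem mdown_eq (h : IsConformalOn U Ω G H) (ht : t ∈ U) (X : VF n) :
    mdown H X t = Ω t ^ 2 • mdown G X t := by
  rw [mdown_eq_mulVec, mdown_eq_mulVec, h.eq t ht, Matrix.smul_mulVec]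

theorem mup_eq (h : IsConformalOn U Ω G H) (ht : t ∈ U) (α : OneForm n) :
    mup H α t = (Ω t ^ 2)⁻¹ • mup G α t := by
  rw [mup_eq_mulVec, mup_eq_mulVec, h.inv_eq ht, Matrix.smul_mulVec]

theorem pder_eq (h : IsConformalOn U Ω G H) (ht : t ∈ U) (i j k : Fin n) :
    pder i (fun s => H s j k) t
      = Ω t ^ 2 * (pder i (fun s => G s j k) t + 2 * dlog Ω t i * G t j k) := by
  rw [pder_congr h.isOpen ht (fun s hs => h.apply_eq hs j k),
    pder_sq_mul (h.smooth.differentiableAt_of_isOpen h.isOpen ht) (h.ne_zero t ht)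
      (h.met.differentiableAt h.isOpen ht j k)]

theorem chr_eq (h : IsConformalOn U Ω G H) (ht : t ∈ U) (k i j : Fin n) :
    chr H k i j t = chr G k i j t + (if k = j then dlog Ω t i else 0)
      + (if k = i then dlog Ω t j else 0) - G t i j * mup G (dlog Ω) t k := by
  have h0 := h.ne_zero t ht
  have e1 : ∀ a : Fin n, (if k = a then (1 : ℝ) else 0) = ∑ l, (G t)⁻¹ k l * G t a l :=
    fun a => by
      rw [← h.met.sum_inv_mul ht]
      exact Finset.sum_congr rfl fun l _ => by rw [h.met.apply_comm ht]
  have e2 : ∀ a b : Fin n, (if k = a then dlog Ω t b else 0)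
      = dlog Ω t b * ∑ l, (G t)⁻¹ k l * G t a l := fun a b => by rw [← e1]; simp
  rw [e2, e2]
  simp only [chr, mup, h.inv_eq ht, h.pder_eq ht, Matrix.smul_apply, smul_eq_mul]
  simp only [Finset.mul_sum, ← Finset.sum_add_distrib, ← Finset.sum_sub_distrib]
  refine Finset.sum_congr rfl fun l _ => ?_
  field_simp
  ring

theorem covV_eq (h : IsConformalOn U Ω G H) (ht : t ∈ U) (X Y : VF n) :
    covV H X Y t = covV G X Y t + (dlog Ω t ⬝ᵥ X t) • Y t + (dlog Ω t ⬝ᵥ Y t) • X t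
      - mdown2 G X Y t • mup G (dlog Ω) t := by
  funext k
  simp only [_root_.covV_eq, h.chr_eq ht, Pi.add_apply, Pi.sub_apply, Pi.smul_apply, smul_eq_mul,
    add_mul, sub_mul, Finset.sum_add_distrib, Finset.sum_sub_distrib, ite_mul, zero_mul,
    Finset.sum_ite_eq, Finset.mem_univ, if_true, mdown2, dotProduct, Finset.sum_mul]
  have h1 : ∀ (A : Fin n → ℝ), ∑ i, ∑ m, (if k = i then A m * X t i * Y t m else 0)
      = ∑ m, A m * Y t m * X t k := fun A => by
    rw [Finset.sum_comm]
    refine Finset.sum_congr rfl fun m _ => ?_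
    rw [Finset.sum_ite_eq]
    simp only [Finset.mem_univ, if_true]
    ring
  have h2 : ∑ i, ∑ m, G t i m * mup G (dlog Ω) t k * X t i * Y t m
      = ∑ i, ∑ m, G t i m * X t i * Y t m * mup G (dlog Ω) t k :=
    Finset.sum_congr rfl fun i _ => Finset.sum_congr rfl fun m _ => by ring
  rw [h1, h2]
  ring

theorem covF_eq (h : IsConformalOn U Ω G H) (ht : t ∈ U) (X : VF n) (α : OneForm n) :
    covF H X α t = covF G X α t - (dlog Ω t ⬝ᵥ X t) • α t - (α t ⬝ᵥ X t) • dlog Ω t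
      + mup2 G α (dlog Ω) t • mdown G X t := by
  funext k
  simp only [_root_.covF_eq, h.chr_eq ht, Pi.add_apply, Pi.sub_apply, Pi.smul_apply, smul_eq_mul,
    add_mul, sub_mul, Finset.sum_add_distrib, Finset.sum_sub_distrib, ite_mul, zero_mul,
    Finset.sum_ite_eq', Finset.mem_univ, if_true, mup2_eq_dotProduct, mdown, dotProduct,
    Finset.sum_mul, Finset.mul_sum]
  have h1 : ∑ i, ∑ m, G t i k * mup G (dlog Ω) t m * X t i * α t m
      = ∑ i, ∑ m, α t m * mup G (dlog Ω) t m * (G t k i * X t i) :=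
    Finset.sum_congr rfl fun i _ => Finset.sum_congr rfl fun m _ => by
      rw [h.met.apply_comm ht]; ring
  have h2 : ∑ i, dlog Ω t k * X t i * α t i = ∑ i, α t i * X t i * dlog Ω t k :=
    Finset.sum_congr rfl fun i _ => by ring
  rw [h1, h2]
  ring

theorem mup_covF_eq (h : IsConformalOn U Ω G H) (ht : t ∈ U) (X : VF n) (α : OneForm n) :
    mup H (covF H X α) t = (Ω t ^ 2)⁻¹ • (mup G (covF G X α) t
      - (dlog Ω t ⬝ᵥ X t) • mup G α t - (α t ⬝ᵥ X t) • mup G (dlog Ω) t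
      + (α t ⬝ᵥ mup G (dlog Ω) t) • X t) := by
  rw [h.mup_eq ht, mup_eq_mulVec, h.covF_eq ht]
  simp only [Matrix.mulVec_add, Matrix.mulVec_sub, Matrix.mulVec_smul, ← mup_eq_mulVec,
    h.met.mup_mdown ht, mup2_eq_dotProduct]

theorem curvV_eq (h : IsConformalOn U Ω G H) (ht : t ∈ U) {X Y Z : VF n} (hX : SmoothVF U X)
    (hY : SmoothVF U Y) (hZ : SmoothVF U Z) :
    curvV H X Y Z t = curvV G X Y Z t
      + ((covF G X (dlog Ω) t - (dlog Ω t ⬝ᵥ X t) • dlog Ω t) ⬝ᵥ Z t) • Y t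
      - ((covF G Y (dlog Ω) t - (dlog Ω t ⬝ᵥ Y t) • dlog Ω t) ⬝ᵥ Z t) • X t
      + mdown2 G X Z t • (mup G (covF G Y (dlog Ω)) t
        - (dlog Ω t ⬝ᵥ Y t) • mup G (dlog Ω) t
        + (dlog Ω t ⬝ᵥ mup G (dlog Ω) t) • Y t)
      - mdown2 G Y Z t • (mup G (covF G X (dlog Ω)) t
        - (dlog Ω t ⬝ᵥ X t) • mup G (dlog Ω) t
        + (dlog Ω t ⬝ᵥ mup G (dlog Ω) t) • X t) := by
  have hU := h.isOpen
  have hG := h.met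
  have hθ := h.smooth_dlog
  have key : ∀ {X Y : VF n}, SmoothVF U X → SmoothVF U Y → covV H X (covV H Y Z) t
      = covV G X (covV G Y Z) t
        + (covF G X (dlog Ω) t ⬝ᵥ Y t + dlog Ω t ⬝ᵥ covV G X Y t) • Z t
        + (dlog Ω t ⬝ᵥ Y t) • covV G X Z t
        + (covF G X (dlog Ω) t ⬝ᵥ Z t + dlog Ω t ⬝ᵥ covV G X Z t) • Y t
        + (dlog Ω t ⬝ᵥ Z t) • covV G X Y t
        - (mdown2 G (covV G X Y) Z t + mdown2 G Y (covV G X Z) t) • mup G (dlog Ω) t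
        - mdown2 G Y Z t • mup G (covF G X (dlog Ω)) t
        + (dlog Ω t ⬝ᵥ X t) • (covV G Y Z t + (dlog Ω t ⬝ᵥ Y t) • Z t
          + (dlog Ω t ⬝ᵥ Z t) • Y t - mdown2 G Y Z t • mup G (dlog Ω) t)
        + (dlog Ω t ⬝ᵥ covV G Y Z t + (dlog Ω t ⬝ᵥ Y t) * (dlog Ω t ⬝ᵥ Z t)
          + (dlog Ω t ⬝ᵥ Z t) * (dlog Ω t ⬝ᵥ Y t)
          - mdown2 G Y Z t * (dlog Ω t ⬝ᵥ mup G (dlog Ω) t)) • X t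
        - (mdown2 G X (covV G Y Z) t + (dlog Ω t ⬝ᵥ Y t) * mdown2 G X Z t
          + (dlog Ω t ⬝ᵥ Z t) * mdown2 G X Y t
          - mdown2 G Y Z t * (dlog Ω t ⬝ᵥ X t)) • mup G (dlog Ω) t := by
    intro X Y hX hY
    have s1 := SmoothVF.covV hU hG hY hZ
    have s2 : SmoothVF U fun s => (dlog Ω s ⬝ᵥ Y s) • Z s :=
      fun k => (hθ.dotProduct hY).mul (hZ k)
    have s3 : SmoothVF U fun s => (dlog Ω s ⬝ᵥ Z s) • Y s :=
      fun k => (hθ.dotProduct hZ).mul (hY k)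
    have s4 : SmoothVF U fun s => mdown2 G Y Z s • mup G (dlog Ω) s :=
      fun k => (hY.mdown2 hG hZ).mul (hθ.mup hG k)
    have s12 : SmoothVF U fun s => covV G Y Z s + (dlog Ω s ⬝ᵥ Y s) • Z s :=
      fun k => (s1 k).add (s2 k)
    have s123 : SmoothVF U fun s => covV G Y Z s + (dlog Ω s ⬝ᵥ Y s) • Z s
        + (dlog Ω s ⬝ᵥ Z s) • Y s := fun k => (s12 k).add (s3 k)
    rw [h.covV_eq ht X (covV H Y Z), covV_congr hU ht (fun s hs => h.covV_eq hs Y Z) G X,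
      covV_sub hU ht s123 s4, covV_add hU ht s12 s3, covV_add hU ht s1 s2,
      covV_smul hU ht (hθ.dotProduct hY) hZ, covV_smul hU ht (hθ.dotProduct hZ) hY,
      covV_smul hU ht (hY.mdown2 hG hZ) (hθ.mup hG), lieFun_dotProduct hU ht hθ hY G X,
      lieFun_dotProduct hU ht hθ hZ G X, hG.lieFun_mdown2 hU ht X hY hZ, hG.covV_mup hU ht X hθ]
    have e : mdown2 G X (covV H Y Z) t = mdown2 G X (covV G Y Z) t
        + (dlog Ω t ⬝ᵥ Y t) * mdown2 G X Z t + (dlog Ω t ⬝ᵥ Z t) * mdown2 G X Y t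
        - mdown2 G Y Z t * (dlog Ω t ⬝ᵥ X t) := by
      rw [← hG.mdown2_mup ht X (dlog Ω)]
      simp only [mdown2_eq_dotProduct, mdown_eq_mulVec, h.covV_eq ht Y Z, Matrix.mulVec_add,
        Matrix.mulVec_sub, Matrix.mulVec_smul, dotProduct_add, dotProduct_sub, dotProduct_smul,
        smul_eq_mul]
    rw [e, h.covV_eq ht Y Z]
    simp only [dotProduct_add, dotProduct_sub, dotProduct_smul, smul_eq_mul]
    module
  have kv := hG.vbr_eq hU ht X Y
  have kt : covV H (vbr X Y) Z t = covV G (vbr X Y) Z t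
      + (dlog Ω t ⬝ᵥ covV G X Y t - dlog Ω t ⬝ᵥ covV G Y X t) • Z t
      + (dlog Ω t ⬝ᵥ Z t) • (covV G X Y t - covV G Y X t)
      - (mdown2 G (covV G X Y) Z t - mdown2 G (covV G Y X) Z t) • mup G (dlog Ω) t := by
    rw [h.covV_eq ht (vbr X Y) Z]
    simp only [mdown2_eq_dotProduct, kv, dotProduct_sub, sub_dotProduct]
  have ks := hG.covF_dotProduct_comm hU ht
    (pder_dlog_comm hU h.smooth h.ne_zero ht) X Y
  have km := hG.mdown2_comm ht X Y
  have e : ∀ K : Met n, curvV K X Y Z t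
      = covV K X (covV K Y Z) t - covV K Y (covV K X Z) t - covV K (vbr X Y) Z t := fun _ => rfl
  rw [e, e, key hX hY, key hY hX, kt, ks, km, sub_dotProduct, sub_dotProduct, smul_dotProduct,
    smul_dotProduct]
  simp only [smul_eq_mul]
  module

theorem mup_curvF_eq (h : IsConformalOn U Ω G H) (ht : t ∈ U) {X Y : VF n} (hX : SmoothVF U X)
    (hY : SmoothVF U Y) (α : OneForm n) (P : VF n → Fin n → ℝ)
    (hP : ∀ X, P X = mup G (covF G X (dlog Ω)) t - (dlog Ω t ⬝ᵥ X t) • mup G (dlog Ω) t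
        + ((1 / 2) * (dlog Ω t ⬝ᵥ mup G (dlog Ω) t)) • X t) :
    mup H (curvF H X Y α) t = (Ω t ^ 2)⁻¹ • (mup G (curvF G X Y α) t
      - ((α t ⬝ᵥ Y t) • P X - (α t ⬝ᵥ X t) • P Y + (α t ⬝ᵥ P Y) • X t
        - (α t ⬝ᵥ P X) • Y t)) := by
  have hc : curvF H X Y α t = curvF G X Y α t
      - ((α t ⬝ᵥ Y t) • (covF G X (dlog Ω) t - (dlog Ω t ⬝ᵥ X t) • dlog Ω t)
        - (α t ⬝ᵥ X t) • (covF G Y (dlog Ω) t - (dlog Ω t ⬝ᵥ Y t) • dlog Ω t)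
        + (α t ⬝ᵥ (P Y + ((1 / 2) * (dlog Ω t ⬝ᵥ mup G (dlog Ω) t)) • Y t)) • mdown G X t
        - (α t ⬝ᵥ (P X + ((1 / 2) * (dlog Ω t ⬝ᵥ mup G (dlog Ω) t)) • X t)) • mdown G Y t) := by
    funext k
    have e : ∀ K : Met n, curvF K X Y α t k
        = - (α t ⬝ᵥ curvV K X Y (fun _ => Pi.single k 1) t) := fun _ => rfl
    have em : ∀ X : VF n, mdown2 G X (fun _ => Pi.single k 1) t = mdown G X t k := fun X => by
      rw [h.met.mdown2_comm ht, mdown2_eq_dotProduct, single_one_dotProduct]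
    rw [e, h.curvV_eq ht hX hY (smoothVF_const U _)]
    simp only [em, dotProduct_single_one, dotProduct_add, dotProduct_sub, dotProduct_smul,
      Pi.add_apply, Pi.sub_apply, Pi.smul_apply, smul_eq_mul, e, hP]
    ring
  rw [h.mup_eq ht, mup_eq_mulVec, hc]
  simp only [Matrix.mulVec_add, Matrix.mulVec_sub, Matrix.mulVec_smul, ← mup_eq_mulVec,
    h.met.mup_mdown ht, hP, dotProduct_add, dotProduct_sub, dotProduct_smul, smul_eq_mul]
  module

end IsConformalOn

end Conformal

/-! ### Conformal invariance of compatibility -/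

section Compatibility

open scoped Matrix

variable {U : Set (Pt n)} {t : Pt n} {g g' : Met n} {Ω : Pt n → ℝ}

theorem IsMetricOn.inv (hg : IsMetricOn U g) : IsMetricOn U (fun t => (g t)⁻¹) :=
  ⟨fun i j => hg.contDiffOn_inv i j, fun t ht =>
    ⟨Matrix.IsSymm.ext fun i j => hg.inv_apply_comm ht j i,
      (Matrix.isUnit_nonsing_inv_iff).2 (hg.2 t ht).2⟩⟩

theorem IsMetricOn.pencil (hg : IsMetricOn U g) (hg' : IsMetricOn U g') {lam : ℝ}
    (hl : ∀ t ∈ U, IsUnit ((g t)⁻¹ + lam • (g' t)⁻¹)) : IsMetricOn U (pencil g g' lam) :=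
  IsMetricOn.inv (g := fun t => (g t)⁻¹ + lam • (g' t)⁻¹)
    ⟨fun i j => (hg.contDiffOn_inv i j).add (contDiffOn_const.mul (hg'.contDiffOn_inv i j)),
      fun t ht => ⟨(hg.inv.2 t ht).1.add ((hg'.inv.2 t ht).1.smul _), hl t ht⟩⟩

theorem mup_pencil {lam : ℝ} (hl : IsUnit ((g t)⁻¹ + lam • (g' t)⁻¹)) (α : OneForm n) :
    mup (pencil g g' lam) α t = mup g α t + lam • mup g' α t := by
  rw [mup_eq_mulVec, pencil, Matrix.nonsing_inv_nonsing_inv _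
    ((Matrix.isUnit_iff_isUnit_det _).1 hl), Matrix.add_mulVec, Matrix.smul_mulVec]
  rfl

/-- Compatibility of a pair of metrics is invariant under a common conformal rescaling. -/
theorem Compatible.conformal {h h' : Met n} (hc : Compatible U g g')
    (hg : IsConformalOn U Ω g h) (hg' : IsConformalOn U Ω g' h') : Compatible U h h' := by
  have hsum : ∀ lam : ℝ, ∀ t ∈ U, (h t)⁻¹ + lam • (h' t)⁻¹
      = (Ω t ^ 2)⁻¹ • ((g t)⁻¹ + lam • (g' t)⁻¹) := fun lam t ht => by
    rw [hg.inv_eq ht, hg'.inv_eq ht, smul_add, smul_comm lam]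
  have hunit : ∀ lam : ℝ, (∀ t ∈ U, IsUnit ((h t)⁻¹ + lam • (h' t)⁻¹)) →
      ∀ t ∈ U, IsUnit ((g t)⁻¹ + lam • (g' t)⁻¹) := fun lam hl t ht => by
    have h1 := hl t ht
    rw [hsum lam t ht, Matrix.isUnit_iff_isUnit_det, Matrix.det_smul] at h1
    exact (Matrix.isUnit_iff_isUnit_det _).2 (isUnit_of_mul_isUnit_right h1)
  have hconf : ∀ lam : ℝ, (∀ t ∈ U, IsUnit ((g t)⁻¹ + lam • (g' t)⁻¹)) →
      IsConformalOn U Ω (pencil g g' lam) (pencil h h' lam) := fun lam hl =>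
    { isOpen := hg.isOpen
      met := hg.met.pencil hg'.met hl
      smooth := hg.smooth
      ne_zero := hg.ne_zero
      eq := fun t ht => by
        have h0 := pow_ne_zero 2 (hg.ne_zero t ht)
        rw [pencil, pencil, hsum lam t ht]
        refine Matrix.inv_eq_right_inv ?_
        rw [Matrix.smul_mul, Matrix.mul_smul, smul_smul, Matrix.mul_nonsing_inv _
          ((Matrix.isUnit_iff_isUnit_det _).1 (hl t ht)), inv_mul_cancel₀ h0, one_smul] }
  have hcov : ∀ lam : ℝ, (∀ t ∈ U, IsUnit ((g t)⁻¹ + lam • (g' t)⁻¹)) → ∀ X, SmoothVF U X →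
      ∀ α, SmoothVF U α → ∀ t ∈ U, mup (pencil g g' lam) (covF (pencil g g' lam) X α) t
        = mup g (covF g X α) t + lam • mup g' (covF g' X α) t :=
    fun lam hl X hX α hα t ht => funext fun k => hc.1 lam hl X hX α hα t ht k
  refine ⟨fun lam hl' X hX α hα t ht k => ?_, fun lam hl' X Y hX hY α hα t ht k => ?_⟩
  · have hl := hunit lam hl'
    have key : mup (pencil h h' lam) (covF (pencil h h' lam) X α) t
        = mup h (covF h X α) t + lam • mup h' (covF h' X α) t := by
      rw [(hconf lam hl).mup_covF_eq ht, hg.mup_covF_eq ht, hg'.mup_covF_eq ht,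
        hcov lam hl X hX α hα t ht, mup_pencil (hl t ht), mup_pencil (hl t ht)]
      simp only [dotProduct_add, dotProduct_smul, smul_eq_mul]
      module
    exact congrFun key k
  · have hl := hunit lam hl'
    have hR : mup (pencil g g' lam) (curvF (pencil g g' lam) X Y α) t
        = mup g (curvF g X Y α) t + lam • mup g' (curvF g' X Y α) t :=
      funext fun k => hc.2 lam hl X Y hX hY α hα t ht k
    have key : mup (pencil h h' lam) (curvF (pencil h h' lam) X Y α) t
        = mup h (curvF h X Y α) t + lam • mup h' (curvF h' X Y α) t := by
      rw [(hconf lam hl).mup_curvF_eq ht hX hY α _ fun _ => rfl,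
        hg.mup_curvF_eq ht hX hY α _ fun _ => rfl, hg'.mup_curvF_eq ht hX hY α _ fun _ => rfl,
        hR, hcov lam hl X hX _ hg.smooth_dlog t ht, hcov lam hl Y hY _ hg.smooth_dlog t ht,
        mup_pencil (hl t ht)]
      simp only [dotProduct_add, dotProduct_sub, dotProduct_smul, smul_eq_mul]
      module
    exact congrFun key k

end Compatibility

/-! ### Lie derivatives and exterior derivatives under conformal changes -/

section LieDerivative

open scoped Matrix

variable {U : Set (Pt n)} {t : Pt n} {G H : Met n} {Ω : Pt n → ℝ}

theorem IsMetricOn.lieMet_comm (hU : IsOpen U) (hG : IsMetricOn U G) (ht : t ∈ U) (E : VF n)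
    (i j : Fin n) : lieMet E G t i j = lieMet E G t j i := by
  simp only [lieMet, Matrix.of_apply]
  have h1 : ∀ l, pder l (fun s => G s i j) t = pder l (fun s => G s j i) t := fun l =>
    pder_congr hU ht (fun s hs => hG.apply_comm hs i j) l
  simp only [h1, hG.apply_comm ht j, hG.apply_comm ht i]
  ring

/-- If `∇E` is a multiple of the identity, then `G(E)` is closed. -/
theorem IsMetricOn.pder_mdown_comm (hU : IsOpen U) (hG : IsMetricOn U G) (ht : t ∈ U)
    {E : VF n} (hE : SmoothVF U E) {r : ℝ}
    (h : ∀ j, covV G (fun _ => Pi.single j 1) E t = r • Pi.single j 1) (i j : Fin n) :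
    pder j (fun s => mdown G E s i) t = pder i (fun s => mdown G E s j) t := by
  have key : ∀ i j, mdown G (covV G (fun _ => Pi.single j 1) E) t i = r * G t i j := fun i j => by
    rw [mdown_eq_mulVec, h, Matrix.mulVec_smul, Pi.smul_apply, Matrix.mulVec_single_one]
    rfl
  have h1 := hG.two_mul_mdown_covV_single hU ht hE i j
  have h2 := hG.two_mul_mdown_covV_single hU ht hE j i
  rw [key] at h1 h2
  rw [hG.lieMet_comm hU ht, hG.apply_comm ht] at h2
  linarith

/-- If `E` is conformal Killing and `G(E)` is closed, then `∇E` is a multiple of the identity. -/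
theorem IsMetricOn.covV_eq_smul (hU : IsOpen U) (hG : IsMetricOn U G) (ht : t ∈ U)
    {E : VF n} (hE : SmoothVF U E) {r : ℝ} (hL : ∀ i j, lieMet E G t i j = r * G t i j)
    (hc : ∀ i j, pder j (fun s => mdown G E s i) t = pder i (fun s => mdown G E s j) t)
    (X : VF n) (k : Fin n) : covV G X E t k = (r / 2) * X t k := by
  have hs : ∀ j, covV G (fun _ => Pi.single j 1) E t = (r / 2) • Pi.single j 1 := fun j => by
    have h1 : mdown G (covV G (fun _ => Pi.single j 1) E) t
        = G t *ᵥ ((r / 2) • Pi.single j 1) := by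
      funext i
      have h2 := hG.two_mul_mdown_covV_single hU ht hE i j
      rw [hc, sub_self, hL] at h2
      rw [Matrix.mulVec_smul, Pi.smul_apply, Matrix.mulVec_single_one, smul_eq_mul,
        Matrix.col_apply]
      linarith
    rw [← hG.mup_mdown ht (covV G (fun _ => Pi.single j 1) E), mup_eq_mulVec, h1,
      Matrix.mulVec_mulVec, Matrix.nonsing_inv_mul _ (hG.isUnit_det ht), Matrix.one_mulVec]
  have h3 : covV G X E t k = ∑ i, X t i * covV G (fun _ => Pi.single i 1) E t k := by
    simp only [covV_single]
    rfl
  rw [h3]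
  simp [hs, Pi.single_apply, mul_comm]

theorem IsConformalOn.lieMet_eq (h : IsConformalOn U Ω G H) (ht : t ∈ U) (E : VF n)
    (i j : Fin n) :
    lieMet E H t i j = Ω t ^ 2 * (lieMet E G t i j + 2 * (dlog Ω t ⬝ᵥ E t) * G t i j) := by
  simp only [lieMet, Matrix.of_apply, h.pder_eq ht, h.apply_eq ht, mul_assoc, ← Finset.mul_sum]
  have h1 : ∑ l, E t l * (Ω t ^ 2 * (pder l (fun s => G s i j) t
      + 2 * (dlog Ω t l * G t i j))) = Ω t ^ 2 * (∑ l, E t l * pder l (fun s => G s i j) t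
      + 2 * (dlog Ω t ⬝ᵥ E t) * G t i j) := by
    simp only [dotProduct, Finset.mul_sum, Finset.sum_mul, ← Finset.sum_add_distrib]
    exact Finset.sum_congr rfl fun l _ => by ring
  rw [h1]
  ring

theorem IsConformalOn.pder_mdown_eq (h : IsConformalOn U Ω G H) (ht : t ∈ U) {E : VF n}
    (hE : SmoothVF U E) (i j : Fin n) :
    pder j (fun s => mdown H E s i) t = Ω t ^ 2 *
      (pder j (fun s => mdown G E s i) t + 2 * dlog Ω t j * mdown G E t i) := by
  rw [pder_congr h.isOpen ht (fun s hs => congrFun (h.mdown_eq hs E) i)]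
  exact pder_sq_mul (h.smooth.differentiableAt_of_isOpen h.isOpen ht) (h.ne_zero t ht)
    ((hE.mdown h.met).differentiableAt h.isOpen ht i) j

end LieDerivative

/-! ### Multiplications on tangent vectors under conformal changes -/

section Multiplication

open scoped Matrix

variable {U : Set (Pt n)} {t : Pt n} {G H : Met n} {Ω : Pt n → ℝ} {c : Mul2 n}

/-- The endomorphism `X •` of tangent vectors. -/
def mulLeftMat (c : Mul2 n) (X : VF n) (t : Pt n) : Matrix (Fin n) (Fin n) ℝ :=
  Matrix.of fun k j => ∑ i, c t k i j * X t i

theorem mapp_eq_mulVec (c : Mul2 n) (X Y : VF n) (t : Pt n) :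
    mapp c X Y t = mulLeftMat c X t *ᵥ Y t := by
  funext k
  simp only [mapp, mulLeftMat, Matrix.mulVec, dotProduct, Matrix.of_apply, Finset.sum_mul]
  exact Finset.sum_comm

theorem mapp_comm (hc : ∀ a i j, c t a i j = c t a j i) (X Y : VF n) :
    mapp c X Y t = mapp c Y X t := by
  funext k
  simp only [mapp]
  rw [Finset.sum_comm]
  exact Finset.sum_congr rfl fun i _ => Finset.sum_congr rfl fun j _ => by rw [hc]; ring

theorem mdown2_mapp_left
    (hinv : ∀ x y z, (∑ m, G t m z * c t m x y) = ∑ m, G t x m * c t m y z) (X Y Z : VF n) :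
    mdown2 G (mapp c X Y) Z t = mdown2 G X (mapp c Y Z) t := by
  have h1 : mdown2 G (mapp c X Y) Z t
      = ∑ x, ∑ y, ∑ z, (∑ m, G t m z * c t m x y) * (X t x * Y t y * Z t z) := by
    simp only [mdown2, mapp, Finset.sum_mul, Finset.mul_sum]
    rw [Finset.sum_comm]
    rw [Finset.sum_congr rfl fun z _ => Finset.sum_comm]
    rw [Finset.sum_comm]
    refine Finset.sum_congr rfl fun x _ => ?_
    rw [Finset.sum_congr rfl fun z _ => Finset.sum_comm]
    rw [Finset.sum_comm]
    exact Finset.sum_congr rfl fun y _ => Finset.sum_congr rfl fun z _ =>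
      Finset.sum_congr rfl fun m _ => by ring
  have h2 : mdown2 G X (mapp c Y Z) t
      = ∑ x, ∑ y, ∑ z, (∑ m, G t x m * c t m y z) * (X t x * Y t y * Z t z) := by
    simp only [mdown2, mapp, Finset.sum_mul, Finset.mul_sum]
    refine Finset.sum_congr rfl fun x _ => ?_
    rw [Finset.sum_comm]
    refine Finset.sum_congr rfl fun y _ => ?_
    rw [Finset.sum_comm]
    exact Finset.sum_congr rfl fun z _ => Finset.sum_congr rfl fun m _ => by ring
  simp only [h1, h2, hinv]

theorem IsConformalOn.covMul4_eq (h : IsConformalOn U Ω G H) (ht : t ∈ U)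
    (hc : ∀ a i j, c t a i j = c t a j i)
    (hinv : ∀ x y z, (∑ m, G t m z * c t m x y) = ∑ m, G t x m * c t m y z) (X Y Z V : VF n) :
    covMul4 H c X Y Z V t = Ω t ^ 2 * (covMul4 G c X Y Z V t
      + (dlog Ω t ⬝ᵥ mapp c Y Z t) * mdown2 G X V t
      + (dlog Ω t ⬝ᵥ mapp c Y V t) * mdown2 G X Z t
      + (dlog Ω t ⬝ᵥ mapp c Z V t) * mdown2 G X Y t
      - (dlog Ω t ⬝ᵥ X t) * mdown2 G (mapp c Y Z) V t
      - (dlog Ω t ⬝ᵥ Y t) * mdown2 G (mapp c X Z) V t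
      - (dlog Ω t ⬝ᵥ Z t) * mdown2 G (mapp c X Y) V t
      - (dlog Ω t ⬝ᵥ V t) * mdown2 G (mapp c Y Z) X t) := by
  have hG := h.met
  have hT : ∀ W, mdown2 G (mapp c (mup G (dlog Ω)) W) V t = dlog Ω t ⬝ᵥ mapp c W V t := fun W => by
    rw [mdown2_mapp_left hinv, hG.mdown2_comm ht, hG.mdown2_mup ht]
  have hT' : mdown2 G (mup G (dlog Ω)) V t = dlog Ω t ⬝ᵥ V t := by
    rw [hG.mdown2_comm ht, hG.mdown2_mup ht]
  have hm : covMul H c X Y Z t = covMul G c X Y Z t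
      + (dlog Ω t ⬝ᵥ mapp c Y Z t) • X t - mdown2 G (mapp c Y Z) X t • mup G (dlog Ω) t
      - (dlog Ω t ⬝ᵥ X t) • mapp c Y Z t - (dlog Ω t ⬝ᵥ Y t) • mapp c X Z t
      - (dlog Ω t ⬝ᵥ Z t) • mapp c X Y t
      + mdown2 G X Y t • mapp c (mup G (dlog Ω)) Z t
      + mdown2 G X Z t • mapp c (mup G (dlog Ω)) Y t := by
    have e : ∀ K : Met n, covMul K c X Y Z t = covV K X (mapp c Y Z) t
        - mapp c (covV K X Y) Z t - mapp c Y (covV K X Z) t := fun _ => rfl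
    rw [e, e, mapp_comm hc _ Z, mapp_comm hc _ Z, h.covV_eq ht X (mapp c Y Z),
      mapp_eq_mulVec c Z (covV H X Y), mapp_eq_mulVec c Y (covV H X Z), h.covV_eq ht X Y,
      h.covV_eq ht X Z, hG.mdown2_comm ht X (mapp c Y Z), mapp_comm hc X Y, mapp_comm hc X Z,
      mapp_comm hc (mup G (dlog Ω)) Y, mapp_comm hc (mup G (dlog Ω)) Z]
    simp only [Matrix.mulVec_add, Matrix.mulVec_sub, Matrix.mulVec_smul, ← mapp_eq_mulVec,
      mapp_comm hc Z Y]
    module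
  have ev : ∀ W : VF n, mdown2 G W V t = mdown G V t ⬝ᵥ W t := fun W => by
    rw [mdown2_eq_dotProduct, dotProduct_comm]
  simp only [covMul4]
  rw [h.mdown2_eq ht, ev, hm]
  simp only [dotProduct_add, dotProduct_sub, dotProduct_smul, smul_eq_mul, ← ev, hT, hT']
  ring

end Multiplication

/-! ### Conformal rescalings of a Frobenius manifold -/

section Frobenius

open scoped Matrix

variable {U : Set (Pt n)} {t : Pt n} {c : Mul2 n} {g g' : Met n} {E e : VF n} {D k d : ℝ}
  {Ω : Pt n → ℝ}

namespace IsIntersection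

theorem mapp_eq (hI : IsIntersection U c g g' E d) (ht : t ∈ U) (X : VF n) :
    mapp c E X t = mup g (mdown g' X) t := by
  funext a
  have h : mulLeftMat c E t = (g t)⁻¹ * g' t := by
    ext a j
    rw [Matrix.mul_apply, hI.defn t ht]
    rfl
  rw [mapp_eq_mulVec, h, mup_eq_mulVec, mdown_eq_mulVec, Matrix.mulVec_mulVec]

end IsIntersection

namespace IsFrob

theorem mapp_unit (hF : IsFrob U c g' E e D k) (ht : t ∈ U) (X : VF n) :
    mapp c e X t = X t := by
  have h : mulLeftMat c e t = 1 := by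
    ext a i
    rw [Matrix.one_apply, ← hF.unit t ht]
    rfl
  rw [mapp_eq_mulVec, h, Matrix.one_mulVec]

theorem mapp_mdown2 (hF : IsFrob U c g' E e D k) (ht : t ∈ U) (X Y : VF n) :
    mdown2 g' e (mapp c X Y) t = mdown2 g' X Y t := by
  rw [← mdown2_mapp_left (hF.invar t ht), mdown2_eq_dotProduct, hF.mapp_unit ht,
    ← mdown2_eq_dotProduct]

theorem mdown_eq (hF : IsFrob U c g' E e D k) (hI : IsIntersection U c g g' E d) (ht : t ∈ U) :
    mdown g E t = mdown g' e t := by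
  have h : E t = mup g (mdown g' e) t := by
    rw [← hI.mapp_eq ht, mapp_comm (hF.comm t ht), hF.mapp_unit ht]
  rw [mdown_eq_mulVec, h, ← mdown_eq_mulVec, hI.met.mdown_mup ht]

theorem mdown_unit_ne_zero (hF : IsFrob U c g' E e D k) (ht : t ∈ U) (i : Fin n) :
    mdown g' e t ≠ 0 := fun h => by
  have he : e t = 0 := by
    rw [← hF.met.mup_mdown ht e, mup_eq_mulVec, h, Matrix.mulVec_zero]
  have := hF.unit t ht i i
  simp [he] at this

theorem pder_mdown_comm (hF : IsFrob U c g' E e D k) (hI : IsIntersection U c g g' E d)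
    (hU : IsOpen U) (ht : t ∈ U) (i j : Fin n) :
    pder j (fun s => mdown g E s i) t = pder i (fun s => mdown g E s j) t := by
  rw [pder_congr hU ht (fun s hs => congrFun (hF.mdown_eq hI hs) i),
    pder_congr hU ht (fun s hs => congrFun (hF.mdown_eq hI hs) j)]
  refine hF.met.pder_mdown_comm hU ht hF.smooth_e (r := 0) (fun j => ?_) i j
  rw [zero_smul]
  exact funext fun a => hF.e_par _ (smoothVF_const U _) t ht a

/-- The Frobenius manifold is a weak F-manifold for any conformal rescaling whose rescaled
covariant derivative of the multiplication is symmetric. -/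
theorem isWeakF (hF : IsFrob U c g' E e D k) (hI : IsIntersection U c g g' E d)
    {h' : Met n} (hh' : IsConformalOn U Ω g' h') (hsym : TotSym U h' c) :
    IsWeakF U c h' E e (mup g' (mdown g e)) (fun t => D + 2 * (dlog Ω t ⬝ᵥ E t))
      (fun _ => k) where
  met := hh'.met'
  smooth_c := hF.smooth_c
  smooth_E := hF.smooth_E
  smooth_e := hF.smooth_e
  smooth_Einv := (hF.smooth_e.mdown hI.met).mup hF.met
  smooth_Dt := contDiffOn_const.add
    (contDiffOn_const.mul (hh'.smooth_dlog.dotProduct hF.smooth_E))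
  smooth_k := contDiffOn_const
  comm := hF.comm
  assoc := hF.assoc
  unit := hF.unit
  invar := fun t ht x y z => by
    simp only [hh'.apply_eq ht, mul_assoc, ← Finset.mul_sum, hF.invar t ht]
  lie_g := fun t ht i j => by
    rw [hh'.lieMet_eq ht, hF.lie_g t ht, hh'.apply_eq ht]
    ring
  lie_c := hF.lie_c
  e_inv := fun t ht a => by
    refine (congrFun (hI.mapp_eq ht (mup g' (mdown g e))) a).trans ?_
    rw [mup_eq_mulVec, hF.met.mdown_mup ht, ← mup_eq_mulVec, hI.met.mup_mdown ht]
  sym_E := fun Y Z V hY hZ hV t ht => (hsym E Y Z V hF.smooth_E hY hZ hV t ht).1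

/-- If `dΩ` is pointwise proportional to `g(E)`, the rescaled covariant derivative of the
multiplication is totally symmetric. -/
theorem totSym_conformal (hF : IsFrob U c g' E e D k) {h' : Met n}
    (hh' : IsConformalOn U Ω g' h')
    (hw : ∀ t ∈ U, ∃ f : ℝ, dlog Ω t = f • mdown g' e t) : TotSym U h' c := by
  intro X Y Z V hX hY hZ hV t ht
  obtain ⟨f, hf⟩ := hw t ht
  have hcomm := hF.comm t ht
  have hinv := hF.invar t ht
  have hG := hF.met
  have hA : ∀ X Y, dlog Ω t ⬝ᵥ mapp c X Y t = f * mdown2 g' X Y t := fun X Y => by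
    rw [hf, smul_dotProduct, smul_eq_mul, ← hF.mapp_mdown2 ht, hG.mdown2_comm ht,
      mdown2_eq_dotProduct, dotProduct_comm]
  have hC : ∀ X Y Z, mdown2 g' (mapp c X Y) Z t = mdown2 g' (mapp c Y X) Z t := fun X Y Z => by
    rw [mdown2_eq_dotProduct, mapp_comm hcomm, ← mdown2_eq_dotProduct]
  have hC' : ∀ X Y Z, mdown2 g' (mapp c X Y) Z t = mdown2 g' (mapp c X Z) Y t := fun X Y Z => by
    rw [hC X Y, mdown2_mapp_left hinv, hG.mdown2_comm ht]
  obtain ⟨h1, h2, h3⟩ := hF.tot_sym X Y Z V hX hY hZ hV t ht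
  simp only [hh'.covMul4_eq ht hcomm hinv, hA]
  refine ⟨?_, ?_, ?_⟩
  · have e₁ : mdown2 g' (mapp c Y Z) X t = mdown2 g' (mapp c X Z) Y t :=
      (hC' Y Z X).trans ((hC Y X Z).trans (hC' X Y Z))
    rw [h1, hC X Y V, e₁, hG.mdown2_comm ht X Y]
    ring
  · rw [h2, hC Z Y V, hC Z Y X, hG.mdown2_comm ht Z Y]
    ring
  · have e₁ : mdown2 g' (mapp c Y V) X t = mdown2 g' (mapp c X Y) V t :=
      (hC' Y V X).trans (hC Y X V)
    have e₂ : mdown2 g' (mapp c Y Z) X t = mdown2 g' (mapp c X Y) Z t :=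
      (hC' Y Z X).trans (hC Y X Z)
    rw [h3, e₁, e₂, hC' Y V Z, hC' X V Z, hG.mdown2_comm ht V Z]
    ring

/-- If the covariant derivative of the multiplication is symmetric along `E` after a conformal
rescaling, then `dΩ` is pointwise proportional to `g(E)`. -/
theorem dlog_eq_smul_of_sym (hF : IsFrob U c g' E e D k) (hI : IsIntersection U c g g' E d)
    {h' : Met n} (hh' : IsConformalOn U Ω g' h')
    (hsym : ∀ Y Z V : VF n, SmoothVF U Y → SmoothVF U Z → SmoothVF U V → ∀ t ∈ U,
      covMul4 h' c E Y Z V t = covMul4 h' c Y E Z V t) (ht : t ∈ U) :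
    ∃ f : ℝ, dlog Ω t = f • mdown g' e t := by
  rcases isEmpty_or_nonempty (Fin n) with _ | ⟨⟨i₀⟩⟩
  · exact ⟨0, Subsingleton.elim _ _⟩
  have hcomm := hF.comm t ht
  have hinv := hF.invar t ht
  have hG := hF.met
  have hΩ2 : Ω t ^ 2 ≠ 0 := pow_ne_zero 2 (hh'.ne_zero t ht)
  have hε : mdown g' E t ≠ 0 := fun h => by
    refine hF.mdown_unit_ne_zero ht i₀ ?_
    rw [← hF.mdown_eq hI ht, mdown_eq_mulVec, ← hG.mup_mdown ht E, mup_eq_mulVec, h,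
      Matrix.mulVec_zero, Matrix.mulVec_zero]
  obtain ⟨i₁, hi₁⟩ := Function.ne_iff.mp hε
  have hE := hF.smooth_E
  obtain ⟨V₀, hV₀, hone⟩ : ∃ V₀ : VF n, SmoothVF U V₀ ∧ mdown2 g' E V₀ t = 1 := by
    refine ⟨fun _ => Pi.single i₁ (mdown g' E t i₁)⁻¹, smoothVF_const U _, ?_⟩
    rw [hG.mdown2_comm ht, mdown2_eq_dotProduct, single_dotProduct]
    exact inv_mul_cancel₀ hi₁
  have hone' : mdown2 g' V₀ E t = 1 := by rw [hG.mdown2_comm ht, hone]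
  let A : VF n → VF n → ℝ := fun X Y => dlog Ω t ⬝ᵥ mapp c X Y t
  have hA : ∀ X Y, A X Y = A Y X := fun X Y => by
    simp only [A]
    rw [mapp_comm hcomm]
  have hC : ∀ X Y Z, mdown2 g' (mapp c X Y) Z t = mdown2 g' (mapp c Y X) Z t := fun X Y Z => by
    rw [mdown2_eq_dotProduct, mapp_comm hcomm, ← mdown2_eq_dotProduct]
  have hC' : ∀ X Y Z, mdown2 g' (mapp c X Y) Z t = mdown2 g' (mapp c X Z) Y t := fun X Y Z => by
    rw [hC X Y, mdown2_mapp_left hinv, hG.mdown2_comm ht]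
  have hR : ∀ Y Z V, SmoothVF U Y → SmoothVF U Z → SmoothVF U V →
      A Y Z * mdown2 g' E V t + A Y V * mdown2 g' E Z t
        = A E Z * mdown2 g' Y V t + A E V * mdown2 g' Y Z t := fun Y Z V hY hZ hV => by
    have h := hsym Y Z V hY hZ hV t ht
    rw [hh'.covMul4_eq ht hcomm hinv, hh'.covMul4_eq ht hcomm hinv,
      (hF.tot_sym E Y Z V hE hY hZ hV t ht).1] at h
    have h := mul_left_cancel₀ hΩ2 h
    have e₁ : mdown2 g' (mapp c Y Z) E t = mdown2 g' (mapp c E Z) Y t :=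
      (hC' Y Z E).trans ((hC Y E Z).trans (hC' E Y Z))
    rw [hC E Y V, e₁, hG.mdown2_comm ht E Y] at h
    simp only [A]
    linear_combination h
  have h₁ : ∀ Y, SmoothVF U Y → A Y V₀ = A E V₀ * mdown2 g' Y V₀ t := fun Y hY => by
    have h := hR Y V₀ V₀ hY hV₀ hV₀
    rw [hone] at h
    linear_combination h / 2
  have h₂ : ∀ Y Z, SmoothVF U Y → SmoothVF U Z →
      A Y Z = A E V₀ * mdown2 g' Y Z t
        + mdown2 g' Y V₀ t * (A E Z - A E V₀ * mdown2 g' E Z t) := fun Y Z hY hZ => by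
    have h := hR Y Z V₀ hY hZ hV₀
    rw [hone, h₁ Y hY] at h
    linear_combination h
  have h₃ : A E E = A E V₀ * mdown2 g' E E t := by
    have h := hR V₀ E E hV₀ hE hE
    rw [hone', hA V₀ E] at h
    linear_combination -h / 2
  have h₄ : ∀ Z, SmoothVF U Z → A E Z = A E V₀ * mdown2 g' E Z t := fun Z hZ => by
    have h := h₂ Z E hZ hE
    rw [hA Z E, h₃, hG.mdown2_comm ht Z E] at h
    linear_combination h
  refine ⟨A E V₀, funext fun i => ?_⟩
  have h := h₂ e (fun _ => Pi.single i 1) hF.smooth_e (smoothVF_const U _)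
  rw [h₄ (fun _ => Pi.single i 1) (smoothVF_const U _), sub_self, mul_zero, add_zero, hG.mdown2_comm ht,
    mdown2_eq_dotProduct, single_one_dotProduct] at h
  simp only [A] at h
  rw [hF.mapp_unit ht, dotProduct_single_one] at h
  exact h

/-- Proportionality of `dΩ` and `g(E)`, expressed by the vanishing of `g(E) ∧ dΩ`. -/
theorem wedge_eq_zero_iff (hF : IsFrob U c g' E e D k) (hI : IsIntersection U c g g' E d)
    (ht : t ∈ U) (h0 : Ω t ≠ 0) :
    (∀ i m, mdown g E t i * pder m Ω t = mdown g E t m * pder i Ω t)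
      ↔ ∃ f : ℝ, dlog Ω t = f • mdown g' e t := by
  rw [hF.mdown_eq hI ht]
  have hd : ∀ i, pder i Ω t = dlog Ω t i * Ω t := fun i => (div_mul_cancel₀ _ h0).symm
  constructor
  · intro h
    rcases isEmpty_or_nonempty (Fin n) with _ | ⟨⟨i₀⟩⟩
    · exact ⟨0, Subsingleton.elim _ _⟩
    obtain ⟨i, hi⟩ := Function.ne_iff.mp (hF.mdown_unit_ne_zero ht i₀)
    have hi : mdown g' e t i ≠ 0 := hi
    refine ⟨dlog Ω t i / mdown g' e t i, funext fun m => ?_⟩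
    have := h i m
    simp only [dlog, Pi.smul_apply, smul_eq_mul]
    field_simp
    linear_combination this
  · rintro ⟨f, hf⟩ i m
    simp only [hd, hf, Pi.smul_apply, smul_eq_mul]
    ring

/-- The Euler vector field of a conformally rescaled weak quasi-homogeneous pencil forces
`g(E) ∧ dΩ = 0`. -/
theorem wedge_eq_zero_of_isWQH (hF : IsFrob U c g' E e D k) (hI : IsIntersection U c g g' E d)
    {h h' : Met n} (hh : IsConformalOn U Ω g h) {D₀ Dt₀ : Pt n → ℝ}
    (hq : IsWQH U h h' E D₀ Dt₀) (ht : t ∈ U) (i m : Fin n) :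
    mdown g E t i * pder m Ω t = mdown g E t m * pder i Ω t := by
  have h0 := hh.ne_zero t ht
  have hd : ∀ i, pder i Ω t = dlog Ω t i * Ω t := fun i => (div_mul_cancel₀ _ h0).symm
  have hc := hq.met_h.pder_mdown_comm hh.isOpen ht hF.smooth_E (r := D₀ t / 2)
    (fun j => funext fun a => hq.cov_E _ (smoothVF_const U _) t ht a) i m
  rw [hh.pder_mdown_eq ht hF.smooth_E, hh.pder_mdown_eq ht hF.smooth_E,
    hF.pder_mdown_comm hI hh.isOpen ht i m] at hc
  have hc := mul_left_cancel₀ (pow_ne_zero 2 h0) hc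
  rw [hd, hd]
  linear_combination Ω t / 2 * hc

/-- If `g(E) ∧ dΩ = 0`, the conformally rescaled pencil is weakly quasi-homogeneous. -/
theorem isWQH (hF : IsFrob U c g' E e D k) (hI : IsIntersection U c g g' E d)
    {h h' : Met n} (hh : IsConformalOn U Ω g h) (hh' : IsConformalOn U Ω g' h')
    (hw : ∀ t ∈ U, ∀ i m, mdown g E t i * pder m Ω t = mdown g E t m * pder i Ω t) :
    IsWQH U h h' E (fun t => (1 - d) + 2 * (dlog Ω t ⬝ᵥ E t))
      (fun t => D + 2 * (dlog Ω t ⬝ᵥ E t)) where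
  met_h := hh.met'
  met_h' := hh'.met'
  compat := hI.compat.conformal hh hh'
  smooth_E := hF.smooth_E
  smooth_D := contDiffOn_const.add
    (contDiffOn_const.mul (hh'.smooth_dlog.dotProduct hF.smooth_E))
  smooth_Dt := contDiffOn_const.add
    (contDiffOn_const.mul (hh'.smooth_dlog.dotProduct hF.smooth_E))
  lie_h' := fun t ht i j => by
    rw [hh'.lieMet_eq ht, hF.lie_g t ht, hh'.apply_eq ht]
    ring
  cov_E := fun X _ t ht a => by
    refine hh.met'.covV_eq_smul hh.isOpen ht hF.smooth_E (fun i j => ?_) (fun i j => ?_) X a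
    · rw [hh.lieMet_eq ht, hI.lie_g t ht, hh.apply_eq ht]
      ring
    · have h0 := hh.ne_zero t ht
      have hd : ∀ i, pder i Ω t = dlog Ω t i * Ω t := fun i => (div_mul_cancel₀ _ h0).symm
      rw [hh.pder_mdown_eq ht hF.smooth_E, hh.pder_mdown_eq ht hF.smooth_E,
        hF.pder_mdown_comm hI hh.isOpen ht i j]
      have := hw t ht i j
      rw [hd, hd] at this
      linear_combination 2 * Ω t * this
  diff_const := ⟨D - (1 - d), fun t _ => by ring⟩

end IsFrob

end Frobenius

/-- For the conformally rescaled pencil (h, h̃) = (Ω²g, Ω²g̃) of a Frobenius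
manifold, the following are equivalent: (1) (h, h̃, E) is a weak quasi-homogeneous pencil;
(2) g(E) ∧ dΩ = 0; (3) (U, •, h̃, E) is an F-manifold; (4) (U, •, h̃, E) is a weak
F-manifold. -/
theorem stmt9 {n : ℕ} (U : Set (Pt n)) (hUopen : IsOpen U) (hUconn : IsConnected U)
    (c : Mul2 n) (g' : Met n) (E e : VF n) (D k : ℝ)
    (hF : IsFrob U c g' E e D k)
    (g : Met n) (d : ℝ) (hI : IsIntersection U c g g' E d)
    (Ω : Pt n → ℝ) (hΩ : ContDiffOn ℝ (⊤ : ℕ∞) Ω U) (hΩ0 : ∀ t ∈ U, Ω t ≠ 0)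
    (hreg : RegularTriple U (fun t => (Ω t) ^ 2 • g t) (fun t => (Ω t) ^ 2 • g' t) E) :
    ((∃ D₀ Dt₀ : Pt n → ℝ,
        IsWQH U (fun t => (Ω t) ^ 2 • g t) (fun t => (Ω t) ^ 2 • g' t) E D₀ Dt₀)
      ↔ (∀ t ∈ U, ∀ i m, (∑ j, g t i j * E t j) * pder m Ω t
          = (∑ j, g t m j * E t j) * pder i Ω t))
    ∧ ((∀ t ∈ U, ∀ i m, (∑ j, g t i j * E t j) * pder m Ω t
          = (∑ j, g t m j * E t j) * pder i Ω t)
      ↔ (∃ e' Einv : VF n, ∃ Dt₀ k₀ : Pt n → ℝ,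
          IsWeakF U c (fun t => (Ω t) ^ 2 • g' t) E e' Einv Dt₀ k₀
            ∧ TotSym U (fun t => (Ω t) ^ 2 • g' t) c))
    ∧ ((∃ e' Einv : VF n, ∃ Dt₀ k₀ : Pt n → ℝ,
          IsWeakF U c (fun t => (Ω t) ^ 2 • g' t) E e' Einv Dt₀ k₀
            ∧ TotSym U (fun t => (Ω t) ^ 2 • g' t) c)
      ↔ (∃ e' Einv : VF n, ∃ Dt₀ k₀ : Pt n → ℝ,
          IsWeakF U c (fun t => (Ω t) ^ 2 • g' t) E e' Einv Dt₀ k₀)) := by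
  have hh : IsConformalOn U Ω g (fun t => Ω t ^ 2 • g t) :=
    ⟨hUopen, hI.met, hΩ, hΩ0, fun _ _ => rfl⟩
  have hh' : IsConformalOn U Ω g' (fun t => Ω t ^ 2 • g' t) :=
    ⟨hUopen, hF.met, hΩ, hΩ0, fun _ _ => rfl⟩
  have h21 := hF.isWQH hI hh hh'
  have h23 := fun hw : (∀ t ∈ U, ∀ i m, mdown g E t i * pder m Ω t = mdown g E t m * pder i Ω t) =>
    hF.totSym_conformal hh' fun t ht => (hF.wedge_eq_zero_iff hI ht (hΩ0 t ht)).1 (hw t ht)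
  have h42 : ∀ {e' Einv : VF n} {Dt₀ k₀ : Pt n → ℝ},
      IsWeakF U c (fun t => Ω t ^ 2 • g' t) E e' Einv Dt₀ k₀ →
      ∀ t ∈ U, ∀ i m, mdown g E t i * pder m Ω t = mdown g E t m * pder i Ω t :=
    fun hW t ht => (hF.wedge_eq_zero_iff hI ht (hΩ0 t ht)).2
      (hF.dlog_eq_smul_of_sym hI hh' hW.sym_E ht)
  refine ⟨⟨?_, fun hw => ⟨_, _, h21 hw⟩⟩, ⟨fun hw => ?_, ?_⟩, ⟨?_, ?_⟩⟩
  · rintro ⟨D₀, Dt₀, hq⟩ t ht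
    exact hF.wedge_eq_zero_of_isWQH hI hh hq ht
  · exact ⟨_, _, _, _, hF.isWeakF hI hh' (h23 hw), h23 hw⟩
  · rintro ⟨_, _, _, _, hW, -⟩
    exact h42 hW
  · rintro ⟨e', Einv, Dt₀, k₀, hW, -⟩
    exact ⟨e', Einv, Dt₀, k₀, hW⟩
  · rintro ⟨e', Einv, Dt₀, k₀, hW⟩
    exact ⟨e', Einv, Dt₀, k₀, hW, h23 (h42 hW)⟩
end
end

section
/- Let n ≥ 2 and let c, d be real numbers, not both zero. On the open set V = {t ∈ ℝ^n : c·t^n + d ≠ 0}, the metric h̃ with components h̃_{ij}(t) = (c·t^n + d)^{−2} δ_{i+j,n+1} is flat: its curvature tensor R(h̃) vanishes identically on V. -/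
open scoped BigOperators

noncomputable section

variable {n : ℕ}

section AffineConnection

variable {E : Type*} [NormedAddCommGroup E] [NormedSpace ℝ E]

/-- The covariant derivative `D_X Y + p A(X, Y)` on a vector space, with Christoffel tensor a
scalar multiple of a constant bilinear map. -/
def scaledCov (p : E → ℝ) (A : E →L[ℝ] E →L[ℝ] E) (X Y : E → E) (t : E) : E :=
  fderiv ℝ Y t (X t) + p t • A (X t) (Y t)

theorem hasFDerivAt_scaledCov {p : E → ℝ} {p' : E →L[ℝ] ℝ} (A : E →L[ℝ] E →L[ℝ] E)
    {Y Z : E → E} {t : E} (hp : HasFDerivAt p p' t) (hY : DifferentiableAt ℝ Y t)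
    (hZ : ContDiffAt ℝ 2 Z t) :
    ∃ L : E →L[ℝ] E, HasFDerivAt (scaledCov p A Y Z) L t ∧ ∀ v, L v =
      fderiv ℝ (fderiv ℝ Z) t v (Y t) + fderiv ℝ Z t (fderiv ℝ Y t v)
        + (p' v • A (Y t) (Z t)
          + p t • (A (fderiv ℝ Y t v) (Z t) + A (Y t) (fderiv ℝ Z t v))) := by
  have hZ1 : DifferentiableAt ℝ Z t := hZ.differentiableAt (by norm_num)
  have hZ2 : DifferentiableAt ℝ (fderiv ℝ Z) t :=
    (hZ.fderiv_right (m := 1) (by norm_num)).differentiableAt (by norm_num)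
  have h1 := hZ2.hasFDerivAt.clm_apply hY.hasFDerivAt
  have h2 := hp.smul (A.hasFDerivAt_of_bilinear hY.hasFDerivAt hZ1.hasFDerivAt)
  refine ⟨_, h1.add h2, fun v => ?_⟩
  simp
  abel

/-- A scaled connection `D + p A` with `dp = p² ℓ` has zero curvature as soon as
`ℓ(x) A(y, z) + A(x, A(y, z))` is symmetric in `x` and `y`. -/
theorem curvature_scaledCov_eq_zero {p : E → ℝ} {A : E →L[ℝ] E →L[ℝ] E} {l : E →L[ℝ] ℝ}
    (hA : ∀ x y z, l x • A y z + A x (A y z) = l y • A x z + A y (A x z))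
    {X Y Z : E → E} {t : E} (hp : HasFDerivAt p (p t ^ 2 • l) t)
    (hX : DifferentiableAt ℝ X t) (hY : DifferentiableAt ℝ Y t) (hZ : ContDiffAt ℝ 2 Z t) :
    scaledCov p A X (scaledCov p A Y Z) t - scaledCov p A Y (scaledCov p A X Z) t
      - scaledCov p A (fun s => fderiv ℝ Y s (X s) - fderiv ℝ X s (Y s)) Z t = 0 := by
  obtain ⟨L, hL, hL'⟩ := hasFDerivAt_scaledCov A hp hY hZ
  obtain ⟨M, hM, hM'⟩ := hasFDerivAt_scaledCov A hp hX hZ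
  have hsymm : fderiv ℝ (fderiv ℝ Z) t (X t) (Y t) = fderiv ℝ (fderiv ℝ Z) t (Y t) (X t) :=
    (hZ.isSymmSndFDerivAt (by simp)) (X t) (Y t)
  have h := hA (X t) (Y t) (Z t)
  have e1 : scaledCov p A X (scaledCov p A Y Z) t
      = L (X t) + p t • A (X t) (scaledCov p A Y Z t) := by
    rw [← hL.fderiv]; rfl
  have e2 : scaledCov p A Y (scaledCov p A X Z) t
      = M (Y t) + p t • A (Y t) (scaledCov p A X Z t) := by
    rw [← hM.fderiv]; rfl
  rw [e1, e2, hL', hM']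
  simp only [scaledCov, map_add, map_sub, map_smul, smul_apply,
    sub_apply, smul_eq_mul, hsymm]
  have h' : A (X t) (A (Y t) (Z t)) = l (Y t) • A (X t) (Z t) + A (Y t) (A (X t) (Z t))
      - l (X t) • A (Y t) (Z t) := by
    rw [← h]; abel
  rw [h']
  module

end AffineConnection

theorem sum_pder_eq_fderiv {Y : VF n} {t : Pt n} (hY : DifferentiableAt ℝ Y t) (v : Fin n → ℝ)
    (k : Fin n) : ∑ i, v i * pder i (fun s => Y s k) t = fderiv ℝ Y t v k := by
  have h : ∀ i, pder i (fun s => Y s k) t = fderiv ℝ Y t (Pi.single i 1) k := fun i => by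
    rw [pder, (hasFDerivAt_pi'.1 hY.hasFDerivAt k).fderiv]; rfl
  conv_rhs => rw [pi_eq_sum_univ' v]
  simp [h, map_sum, Finset.sum_apply]

theorem vbr_eq_fderiv {X Y : VF n} {t : Pt n} (hX : DifferentiableAt ℝ X t)
    (hY : DifferentiableAt ℝ Y t) : vbr X Y t = fderiv ℝ Y t (X t) - fderiv ℝ X t (Y t) := by
  ext k
  simp [vbr, Finset.sum_sub_distrib, sum_pder_eq_fderiv hX, sum_pder_eq_fderiv hY]

theorem SmoothVF.contDiffAt {U : Set (Pt n)} (hU : IsOpen U) {X : VF n} (hX : SmoothVF U X)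
    {t : Pt n} (ht : t ∈ U) : ContDiffAt ℝ 2 X t :=
  ((contDiffOn_pi.2 hX).contDiffAt (hU.mem_nhds ht)).of_le (WithTop.coe_le_coe.2 (le_top : (2 : ℕ∞) ≤ ⊤))

theorem covV_eq_scaledCov {g : Met n} {p : Pt n → ℝ} {A : Pt n →L[ℝ] Pt n →L[ℝ] Pt n}
    {X Y : VF n} {t : Pt n}
    (hg : ∀ k, ∀ u v : Pt n, ∑ i, u i * ∑ m, chr g k i m t * v m = p t * A u v k)
    (hY : DifferentiableAt ℝ Y t) : covV g X Y t = scaledCov p A X Y t := by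
  ext k
  simp only [covV, mul_add, Finset.sum_add_distrib, hg, sum_pder_eq_fderiv hY, scaledCov]
  rfl

/-- A metric whose Christoffel tensor is `p A`, with `A` constant and `dp = p² ℓ`, is flat under
the algebraic condition of `curvature_scaledCov_eq_zero`. -/
theorem flatOn_of_chr_eq {U : Set (Pt n)} (hU : IsOpen U) {g : Met n} {p : Pt n → ℝ}
    {A : Pt n →L[ℝ] Pt n →L[ℝ] Pt n} {l : Pt n →L[ℝ] ℝ}
    (hg : ∀ t ∈ U, ∀ k, ∀ u v : Pt n, ∑ i, u i * ∑ m, chr g k i m t * v m = p t * A u v k)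
    (hA : ∀ x y z, l x • A y z + A x (A y z) = l y • A x z + A y (A x z))
    (hp : ∀ t ∈ U, HasFDerivAt p (p t ^ 2 • l) t) : FlatOn U g := by
  intro X Y Z hX hY hZ t ht k
  have hX' := (hX.contDiffAt hU ht).differentiableAt two_ne_zero
  have hY' := (hY.contDiffAt hU ht).differentiableAt two_ne_zero
  have hZ' := hZ.contDiffAt hU ht
  have key : ∀ {V W : VF n}, SmoothVF U W → DifferentiableAt ℝ W t →
      covV g V (covV g W Z) t = scaledCov p A V (scaledCov p A W Z) t := by
    intro V W hW hW'
    have hev : covV g W Z =ᶠ[nhds t] scaledCov p A W Z := by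
      filter_upwards [hU.mem_nhds ht] with s hs'
      exact covV_eq_scaledCov (hg s hs') ((hZ.contDiffAt hU hs').differentiableAt two_ne_zero)
    obtain ⟨L, hL, -⟩ := hasFDerivAt_scaledCov A (hp t ht) hW' hZ'
    rw [covV_eq_scaledCov (hg t ht) (hL.congr_of_eventuallyEq hev).differentiableAt,
      scaledCov, scaledCov, hev.fderiv_eq, hev.eq_of_nhds]
  have hb : covV g (vbr X Y) Z t
      = scaledCov p A (fun s => fderiv ℝ Y s (X s) - fderiv ℝ X s (Y s)) Z t := by
    rw [covV_eq_scaledCov (hg t ht) (hZ'.differentiableAt two_ne_zero), scaledCov, scaledCov,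
      vbr_eq_fderiv hX' hY']
  have h := congrFun (curvature_scaledCov_eq_zero hA (hp t ht) hX' hY' hZ') k
  rw [← key hY hY', ← key hX hX', ← hb] at h
  exact h

theorem antidiagonal_inv {a : ℝ} (ha : a ≠ 0) :
    (Matrix.of fun i j : Fin n => if j = i.rev then a⁻¹ else 0)⁻¹
      = Matrix.of fun i j : Fin n => if j = i.rev then a else 0 := by
  apply Matrix.inv_eq_right_inv
  ext i j
  rw [Matrix.mul_apply, Finset.sum_eq_single i.rev]
  · simp [Matrix.one_apply, ha, eq_comm]
  · simp +contextual
  · simp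

/-- The conformally antidiagonal metric `(c tᴺ + d)⁻² δ_{j, rev i}`. -/
def conformalAntidiag (c d : ℝ) (N : Fin n) : Met n := fun t =>
  Matrix.of fun i j : Fin n => if j = i.rev then ((c * t N + d) ^ 2)⁻¹ else 0

theorem pder_conformalAntidiag {c d : ℝ} {N : Fin n} {t : Pt n} (ht : c * t N + d ≠ 0)
    (i j l : Fin n) : pder i (fun s => conformalAntidiag c d N s j l) t =
      if l = j.rev then (if i = N then -2 * c / (c * t N + d) ^ 3 else 0) else 0 := by
  by_cases h : l = j.rev
  · have hN : HasFDerivAt (fun s : Pt n => s N) (ContinuousLinearMap.proj N : Pt n →L[ℝ] ℝ) t :=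
      (ContinuousLinearMap.proj N : Pt n →L[ℝ] ℝ).hasFDerivAt
    have h1 := (hasDerivAt_inv (pow_ne_zero 2 ht)).comp_hasFDerivAt t
      (((hN.const_mul c).add_const d).pow 2)
    have h2 : HasFDerivAt (fun s : Pt n => ((c * s N + d) ^ 2)⁻¹) _ t := h1
    simp only [conformalAntidiag, Matrix.of_apply, h, if_true, pder, h2.fderiv]
    by_cases hi : i = N
    · subst hi
      simp
      field_simp
    · simp [hi, Ne.symm hi]
  · simp [pder, conformalAntidiag, h]

theorem chr_conformalAntidiag {c d : ℝ} {N : Fin n} {t : Pt n} (ht : c * t N + d ≠ 0)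
    (k i j : Fin n) : chr (conformalAntidiag c d N) k i j t =
      -c / (c * t N + d) * ((if i = N then 1 else 0) * (if k = j then 1 else 0)
        + (if j = N then 1 else 0) * (if k = i then 1 else 0)
        - (if k = N.rev then 1 else 0) * (if j = i.rev then 1 else 0)) := by
  have hk : k.rev = N ↔ k = N.rev := Fin.rev_eq_iff
  simp only [chr, pder_conformalAntidiag ht]
  rw [show (conformalAntidiag c d N t)⁻¹ = _ from antidiagonal_inv (pow_ne_zero 2 ht)]
  simp only [Matrix.of_apply, ite_mul, zero_mul, Finset.sum_ite_eq', Finset.mem_univ, if_true,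
    Fin.rev_inj, hk]
  split_ifs <;> field_simp <;> ring

/-- The constant bilinear map `A(u, v) = uᴺ v + vᴺ u - η(u, v) e_{rev N}`, where `η` is the
antidiagonal form. -/
def antidiagTensor (N : Fin n) : Pt n →L[ℝ] Pt n →L[ℝ] Pt n :=
  let l : Pt n →L[ℝ] ℝ := ContinuousLinearMap.proj N
  l.smulRight (ContinuousLinearMap.id ℝ (Pt n))
    + (l.smulRight (ContinuousLinearMap.id ℝ (Pt n))).flip
    - ∑ i : Fin n, (ContinuousLinearMap.proj i : Pt n →L[ℝ] ℝ).smulRight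
        ((ContinuousLinearMap.proj i.rev : Pt n →L[ℝ] ℝ).smulRight (Pi.single N.rev 1 : Pt n))

theorem antidiagTensor_apply (N : Fin n) (u v : Pt n) : antidiagTensor N u v =
    u N • v + v N • u - (∑ i, u i * v i.rev) • (Pi.single N.rev 1 : Pt n) := by
  simp [antidiagTensor, Finset.sum_smul, mul_smul]

theorem antidiag_sum_comm (u v : Pt n) : ∑ i, u i * v i.rev = ∑ i, v i * u i.rev := by
  rw [← Equiv.sum_comp Fin.revPerm]
  simp [mul_comm]

theorem antidiagTensor_identity {N : Fin n} (hN : N ≠ N.rev) (x y z : Pt n) :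
    x N • antidiagTensor N y z + antidiagTensor N x (antidiagTensor N y z)
      = y N • antidiagTensor N x z + antidiagTensor N y (antidiagTensor N x z) := by
  have e0 : ∀ w : Pt n, ∑ i, w i * (Pi.single N.rev 1 : Pt n) i.rev = w N := fun w => by
    simp [Pi.single_apply, Fin.rev_inj]
  have hB : ∀ w u v : Pt n, ∑ i, w i * (antidiagTensor N u v) i.rev
      = u N * (∑ i, w i * v i.rev) + v N * (∑ i, w i * u i.rev)
        - (∑ i, u i * v i.rev) * w N := fun w u v => by
    rw [← e0 w, antidiagTensor_apply]
    simp only [Finset.mul_sum, ← Finset.sum_add_distrib, ← Finset.sum_sub_distrib,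
      Pi.add_apply, Pi.sub_apply, Pi.smul_apply, smul_eq_mul]
    simp only [mul_sub, mul_add, Finset.sum_sub_distrib, Finset.sum_add_distrib, mul_left_comm]
  have hl : ∀ u v : Pt n, antidiagTensor N u v N = 2 * u N * v N := fun u v => by
    simp [antidiagTensor_apply, Pi.single_eq_of_ne hN]; ring
  rw [antidiagTensor_apply N x (antidiagTensor N y z),
    antidiagTensor_apply N y (antidiagTensor N x z), hB, hB, hl, hl,
    antidiagTensor_apply N x z, antidiagTensor_apply N y z, antidiag_sum_comm y x]
  module

theorem chr_contract_conformalAntidiag {c d : ℝ} {N : Fin n} {t : Pt n}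
    (ht : c * t N + d ≠ 0) (k : Fin n) (u v : Pt n) :
    ∑ i, u i * ∑ m, chr (conformalAntidiag c d N) k i m t * v m
      = -c / (c * t N + d) * antidiagTensor N u v k := by
  simp only [chr_conformalAntidiag ht, antidiagTensor_apply, mul_assoc, ← Finset.mul_sum,
    mul_left_comm (u _)]
  congr 1
  simp [add_mul, sub_mul, mul_add, mul_sub, Finset.sum_add_distrib, Finset.sum_sub_distrib,
    Pi.single_apply, mul_comm (u k)]


/-- The metric h̃_{ij}(t) = (c t^n + d)^{-2} δ_{i+j,n+1} is flat on
{t : c t^n + d ≠ 0}. -/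
theorem stmt12 {n : ℕ} (hn : 2 ≤ n) (c d : ℝ) (hcd : c ≠ 0 ∨ d ≠ 0) :
    FlatOn {t : Pt n | c * t ⟨n - 1, by omega⟩ + d ≠ 0}
      (fun t => Matrix.of fun i j : Fin n =>
        if j = i.rev then ((c * t ⟨n - 1, by omega⟩ + d) ^ 2)⁻¹ else 0) := by
  have hN : (⟨n - 1, by omega⟩ : Fin n) ≠ Fin.rev ⟨n - 1, by omega⟩ := by
    simp only [ne_eq, Fin.ext_iff, Fin.val_rev]
    omega
  generalize (⟨n - 1, by omega⟩ : Fin n) = N at hN ⊢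
  change FlatOn _ (conformalAntidiag c d N)
  have hlin : ∀ t : Pt n, HasFDerivAt (fun s : Pt n => c * s N + d)
      (c • (ContinuousLinearMap.proj N : Pt n →L[ℝ] ℝ)) t := fun t =>
    ((ContinuousLinearMap.proj N : Pt n →L[ℝ] ℝ).hasFDerivAt.const_mul c).add_const d
  refine flatOn_of_chr_eq (p := fun t => -c / (c * t N + d)) (A := antidiagTensor N)
    (l := ContinuousLinearMap.proj N) (isOpen_ne_fun (by fun_prop) continuous_const)
    (fun t ht k u v => chr_contract_conformalAntidiag ht k u v)
    (fun x y z => antidiagTensor_identity hN x y z) (fun t ht => ?_)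
  have h := ((hasDerivAt_inv ht).comp_hasFDerivAt t (hlin t)).const_mul (-c)
  refine h.congr_fderiv ?_
  ext v
  simp only [smul_apply, smul_eq_mul, div_eq_mul_inv, ← inv_pow]
  ring
end
end
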